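/- arXiv:1310.4528 — 4 statements merged into one kernel-verified Lean document; each statement's English description precedes it below -/
import Mathlib

section
/- Let f : ℝ → ℝ be a monostable nonlinearity. Then there exists a unique function w of class C² on [0,∞) satisfying w'' + f(w) = 0 on (0,∞), w(0) = 0 and lim_{t→+∞} w(t) = 1, which is positive; moreover this w is strictly increasing, satisfies 0 < w(t) < 1 for all t > 0, and is implicitly determined by the formula t = ∫₀^{w(t)} ds / √( 2 ∫_s^1 f(τ) dτ ) for every t ≥ 0. -/
open Set Filter

/-- A monostable nonlinearity: smooth, `f 0 = f 1 = 0`, positive on `(0,1)`, `f' 1 < 0`. -/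
def Monostable (f : ℝ → ℝ) : Prop :=
  ContDiff ℝ (⊤ : ℕ∞) f ∧ f 0 = 0 ∧ f 1 = 0 ∧ (∀ s ∈ Set.Ioo (0 : ℝ) 1, 0 < f s) ∧ deriv f 1 < 0

/-- `w` is a positive solution (of class `C²` on `[0,∞)`) of `w'' + f(w) = 0` on `(0,∞)`
with `w 0 = 0` and `w(+∞) = 1`. -/
def IsPosSolution (f w : ℝ → ℝ) : Prop :=
  ContDiffOn ℝ 2 w (Set.Ici 0) ∧
  (∀ t ∈ Set.Ioi (0 : ℝ),
    derivWithin (derivWithin w (Set.Ici 0)) (Set.Ici 0) t + f (w t) = 0) ∧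
  w 0 = 0 ∧
  Filter.Tendsto w Filter.atTop (nhds 1) ∧
  (∀ t ∈ Set.Ioi (0 : ℝ), 0 < w t)

/-!
Energy conservation together with `w → 1` forces `w' ^ 2 = 2 ∫_w^1 f` along every solution, so a
positive solution solves the first-order equation `w' = speed w` with `speed s = √(2 ∫_s^1 f)` as
long as it stays below `1`. Separation of variables then determines it as the inverse of the
transit time `x ↦ ∫₀^x ds / speed s`. Since `f 1 = 0` and `f` is Lipschitz on `[0, 1]`, `speed s`
is `O(1 - s)` and the transit time diverges at `1`: hence the inverse is defined on all of
`[0, ∞)`, and no solution reaches `1` in finite time.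
-/

open scoped Topology

/-! ### Calculus on intervals -/

section Calculus

lemma continuousOn_of_strictMonoOn_of_ordConnected_image {α β : Type*}
    [LinearOrder α] [TopologicalSpace α] [OrderTopology α]
    [LinearOrder β] [TopologicalSpace β] [OrderTopology β] {w : α → β} {s : Set α}
    [s.OrdConnected] [(w '' s).OrdConnected] (hw : StrictMonoOn w s) : ContinuousOn w s := by
  rw [continuousOn_iff_continuous_domRestrict]
  exact continuous_subtype_val.comp (hw.orderIso w s).continuous

lemma hasDerivWithinAt_of_local_left_inverse {𝕜 : Type*} [NontriviallyNormedField 𝕜]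
    {T w : 𝕜 → 𝕜} {s S : Set 𝕜} {T' t : 𝕜}
    (hw : Tendsto w (𝓝[s] t) (𝓝[S] (w t))) (hT : HasDerivWithinAt T T' S (w t)) (hT' : T' ≠ 0)
    (ht : t ∈ s) (hTw : ∀ᶠ r in 𝓝[s] t, T (w r) = r) : HasDerivWithinAt w T'⁻¹ s t := by
  have hT_equiv : HasFDerivWithinAt T
      (ContinuousLinearEquiv.unitsEquivAut 𝕜 (Units.mk0 T' hT') : 𝕜 →L[𝕜] 𝕜) S (w t) := hT
  simpa using (HasFDerivWithinAt.of_local_left_inverse hw hT_equiv ht hTw).hasDerivWithinAt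

lemma hasDerivWithinAt_integral_Ico {E : Type*} [NormedAddCommGroup E] [NormedSpace ℝ E]
    [CompleteSpace E] {h : ℝ → E} {a b x : ℝ} (hh : ContinuousOn h (Ico a b))
    (hx : x ∈ Ico a b) : HasDerivWithinAt (fun y => ∫ s in a..y, h s) (h x) (Ico a b) x := by
  obtain ⟨c, hxc, hcb⟩ := exists_between hx.2
  have hhc : ContinuousOn h (Icc a c) := hh.mono (Icc_subset_Ico_right hcb)
  have hxIcc : x ∈ Icc a c := ⟨hx.1, hxc.le⟩
  have : Fact (x ∈ Icc a c) := ⟨hxIcc⟩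
  have hint : IntervalIntegrable h MeasureTheory.volume a x :=
    (hhc.mono (Icc_subset_Icc_right hxc.le)).intervalIntegrable_of_Icc hx.1
  have hderiv : HasDerivWithinAt (fun y => ∫ s in a..y, h s) (h x) (Icc a c) x :=
    intervalIntegral.integral_hasDerivWithinAt_right hint
      (hhc.stronglyMeasurableAtFilter_nhdsWithin measurableSet_Icc x) (hhc x hxIcc)
  refine hderiv.mono_of_mem_nhdsWithin ?_
  filter_upwards [self_mem_nhdsWithin, mem_nhdsWithin_of_mem_nhds (Iic_mem_nhds hxc)] with y hy hyc
  exact ⟨hy.1, hyc⟩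

lemma contDiffOn_two_of_hasDerivWithinAt {𝕜 E : Type*} [NontriviallyNormedField 𝕜]
    [NormedAddCommGroup E] [NormedSpace 𝕜 E] {u v a : 𝕜 → E} {s : Set 𝕜} (hs : UniqueDiffOn 𝕜 s)
    (hu : ∀ t ∈ s, HasDerivWithinAt u (v t) s t) (hv : ∀ t ∈ s, HasDerivWithinAt v (a t) s t)
    (ha : ContinuousOn a s) : ContDiffOn 𝕜 2 u s := by
  have hv_one : ContDiffOn 𝕜 1 v s :=
    (contDiffOn_one_iff_derivWithin hs).2 ⟨fun t ht => (hv t ht).differentiableWithinAt,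
      ha.congr fun t ht => (hv t ht).derivWithin (hs t ht)⟩
  rw [← one_add_one_eq_two, contDiffOn_succ_iff_derivWithin hs]
  exact ⟨fun t ht => (hu t ht).differentiableWithinAt, by simp,
    hv_one.congr fun t ht => (hu t ht).derivWithin (hs t ht)⟩

-- By the mean value theorem, `v` takes the value `u (T + 1) - u T` at some time after `T`.
lemma mapClusterPt_zero_of_hasDerivAt {u v : ℝ → ℝ} {b : ℝ}
    (hu : ∀ᶠ t in atTop, HasDerivAt u (v t) t) (hlim : Tendsto u atTop (𝓝 b)) :
    MapClusterPt 0 atTop v := by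
  have hincr : Tendsto (fun T => u (T + 1) - u T) atTop (𝓝 0) := by
    simpa using (hlim.comp (tendsto_atTop_add_const_right atTop 1 tendsto_id)).sub hlim
  refine mapClusterPt_iff_frequently.2 fun s hs => frequently_atTop.2 fun T₀ => ?_
  obtain ⟨T, hT_mem, hT_deriv, hT₀⟩ :=
    ((hincr.eventually_mem hs).and
      ((eventually_forall_ge_atTop.2 hu).and (eventually_ge_atTop T₀))).exists
  obtain ⟨c, hc, hvc⟩ := exists_hasDerivAt_eq_slope u v (lt_add_one T)
    (fun t ht => (hT_deriv t ht.1).continuousAt.continuousWithinAt) (fun t ht => hT_deriv t ht.1.le)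
  refine ⟨c, hT₀.trans hc.1.le, ?_⟩
  rwa [hvc, add_sub_cancel_left, div_one]

lemma exists_first_hitting {u : ℝ → ℝ} {a b t : ℝ} (hu : ContinuousOn u (Icc a t)) (ht : a ≤ t)
    (ha : u a < b) (hb : b ≤ u t) : ∃ τ ∈ Ioc a t, u τ = b ∧ ∀ s ∈ Ico a τ, u s < b := by
  have hivt : ∀ s ∈ Icc a t, b ≤ u s → ∃ r ∈ Icc a s, u r = b := fun s hs hbs =>
    intermediate_value_Icc hs.1 (hu.mono (Icc_subset_Icc_right hs.2)) ⟨ha.le, hbs⟩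
  have hcompact : IsCompact (Icc a t ∩ u ⁻¹' {b}) :=
    isCompact_Icc.of_isClosed_subset
      (hu.preimage_isClosed_of_isClosed isClosed_Icc isClosed_singleton) inter_subset_left
  obtain ⟨τ, ⟨hτ, huτ⟩, hleast⟩ := hcompact.exists_isLeast (hivt t (right_mem_Icc.2 ht) hb)
  have hτ_ne : a ≠ τ := by
    rintro rfl
    exact ha.ne huτ
  refine ⟨τ, ⟨hτ.1.lt_of_ne hτ_ne, hτ.2⟩, huτ, fun s hs => ?_⟩
  by_contra! hbs
  obtain ⟨r, hr, hur⟩ := hivt s ⟨hs.1, hs.2.le.trans hτ.2⟩ hbs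
  exact (hr.2.trans_lt hs.2).not_ge (hleast ⟨⟨hr.1, hr.2.trans (hs.2.le.trans hτ.2)⟩, hur⟩)

end Calculus

/-! ### Separation of variables -/

/-- The time that a solution of `u' = g u` needs to travel from `a` to `x`. -/
noncomputable def transitTime (g : ℝ → ℝ) (a x : ℝ) : ℝ := ∫ s in a..x, (g s)⁻¹

/-- The solution of `u' = g u`, `u 0 = a` obtained by separation of variables, that is the inverse
of `transitTime g a` on `[a, b)`. Its values at times outside the range of the transit time,
in particular at negative times, are junk. -/
noncomputable def separatedSolution (g : ℝ → ℝ) (a b : ℝ) : ℝ → ℝ :=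
  Function.invFunOn (transitTime g a) (Ico a b)

@[simp]
lemma transitTime_self (g : ℝ → ℝ) (a : ℝ) : transitTime g a a = 0 :=
  intervalIntegral.integral_same

section SeparationOfVariables

variable {g : ℝ → ℝ} {a b : ℝ} (hg : ContinuousOn g (Ico a b)) (hpos : ∀ x ∈ Ico a b, 0 < g x)

include hg hpos

lemma continuousOn_inv_of_pos : ContinuousOn (fun s => (g s)⁻¹) (Ico a b) :=
  hg.inv₀ fun x hx => (hpos x hx).ne'

lemma hasDerivWithinAt_transitTime {x : ℝ} (hx : x ∈ Ico a b) :
    HasDerivWithinAt (transitTime g a) (g x)⁻¹ (Ico a b) x :=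
  hasDerivWithinAt_integral_Ico (continuousOn_inv_of_pos hg hpos) hx

lemma continuousOn_transitTime : ContinuousOn (transitTime g a) (Ico a b) :=
  fun _ hx => (hasDerivWithinAt_transitTime hg hpos hx).continuousWithinAt

lemma strictMonoOn_transitTime : StrictMonoOn (transitTime g a) (Ico a b) :=
  strictMonoOn_of_hasDerivWithinAt_pos (convex_Ico a b) (continuousOn_transitTime hg hpos)
    (fun _ hx => (hasDerivWithinAt_transitTime hg hpos (interior_subset hx)).mono interior_subset)
    (fun x hx => inv_pos.2 (hpos x (interior_subset hx)))

lemma transitTime_eq_of_hasDerivWithinAt {u : ℝ → ℝ} {t : ℝ} (ht : 0 ≤ t)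
    (hu : ∀ s ∈ Icc 0 t, HasDerivWithinAt u (g (u s)) (Icc 0 t) s)
    (hmaps : MapsTo u (Icc 0 t) (Ico a b)) (h0 : u 0 = a) : transitTime g a (u t) = t := by
  have hderiv : ∀ s ∈ Icc 0 t,
      HasDerivWithinAt (fun r => transitTime g a (u r) - r) 0 (Icc 0 t) s := fun s hs => by
    have hcomp := (hasDerivWithinAt_transitTime hg hpos (hmaps hs)).comp s (hu s hs) hmaps
    rw [inv_mul_cancel₀ (hpos _ (hmaps hs)).ne'] at hcomp
    exact (hcomp.sub (hasDerivWithinAt_id s _)).congr_deriv (sub_self 1)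
  have hconst := constant_of_derivWithin_zero
    (fun s hs => (hderiv s hs).differentiableWithinAt)
    (fun s hs => (hderiv s (Ico_subset_Icc_self hs)).derivWithin
      (uniqueDiffOn_Icc (hs.1.trans_lt hs.2) s (Ico_subset_Icc_self hs))) t (right_mem_Icc.2 ht)
  simpa [h0, sub_eq_zero] using hconst

lemma bijOn_transitTime (hab : a < b) (hdiv : Tendsto (transitTime g a) (𝓝[<] b) atTop) :
    BijOn (transitTime g a) (Ico a b) (Ici 0) := by
  have hmono := strictMonoOn_transitTime hg hpos
  refine ⟨fun x hx => ?_, hmono.injOn, fun t ht => ?_⟩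
  · simpa using hmono.monotoneOn (left_mem_Ico.2 hab) hx hx.1
  · obtain ⟨c, htc, hc⟩ := ((hdiv.eventually_ge_atTop t).and (Ico_mem_nhdsLT hab)).exists
    have hsub : Icc a c ⊆ Ico a b := Icc_subset_Ico_right hc.2
    obtain ⟨x, hx, hxt⟩ := intermediate_value_Icc hc.1
      ((continuousOn_transitTime hg hpos).mono hsub) ⟨by simpa using ht, htc⟩
    exact ⟨x, hsub hx, hxt⟩

section

variable (hab : a < b) (hdiv : Tendsto (transitTime g a) (𝓝[<] b) atTop)

include hab hdiv

lemma invOn_separatedSolution :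
    InvOn (separatedSolution g a b) (transitTime g a) (Ico a b) (Ici 0) :=
  (bijOn_transitTime hg hpos hab hdiv).invOn_invFunOn

lemma bijOn_separatedSolution : BijOn (separatedSolution g a b) (Ici 0) (Ico a b) :=
  (bijOn_comm (invOn_separatedSolution hg hpos hab hdiv)).2
    (bijOn_transitTime hg hpos hab hdiv)

lemma separatedSolution_zero : separatedSolution g a b 0 = a := by
  simpa using (invOn_separatedSolution hg hpos hab hdiv).1 (left_mem_Ico.2 hab)

lemma strictMonoOn_separatedSolution : StrictMonoOn (separatedSolution g a b) (Ici 0) := by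
  intro s hs t ht hst
  have hmaps := (bijOn_separatedSolution hg hpos hab hdiv).mapsTo
  have hinv := (invOn_separatedSolution hg hpos hab hdiv).2
  rwa [← (strictMonoOn_transitTime hg hpos).lt_iff_lt (hmaps hs) (hmaps ht), hinv hs, hinv ht]

lemma continuousOn_separatedSolution : ContinuousOn (separatedSolution g a b) (Ici 0) := by
  have : (separatedSolution g a b '' Ici 0).OrdConnected := by
    rw [(bijOn_separatedSolution hg hpos hab hdiv).image_eq]
    exact ordConnected_Ico
  exact continuousOn_of_strictMonoOn_of_ordConnected_image
    (strictMonoOn_separatedSolution hg hpos hab hdiv)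

lemma hasDerivWithinAt_separatedSolution {t : ℝ} (ht : 0 ≤ t) :
    HasDerivWithinAt (separatedSolution g a b) (g (separatedSolution g a b t)) (Ici 0) t := by
  have hmaps := (bijOn_separatedSolution hg hpos hab hdiv).mapsTo
  have hinv := (invOn_separatedSolution hg hpos hab hdiv).2
  have hcont := continuousOn_separatedSolution hg hpos hab hdiv
  simpa only [inv_inv] using hasDerivWithinAt_of_local_left_inverse
    ((hcont t ht).tendsto_nhdsWithin hmaps) (hasDerivWithinAt_transitTime hg hpos (hmaps ht))
    (inv_ne_zero (hpos _ (hmaps ht)).ne') ht (eventually_nhdsWithin_of_forall hinv)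

lemma tendsto_separatedSolution : Tendsto (separatedSolution g a b) atTop (𝓝 b) := by
  have hbij := bijOn_separatedSolution hg hpos hab hdiv
  have hmono := strictMonoOn_separatedSolution hg hpos hab hdiv
  refine tendsto_order.2 ⟨fun x hx => ?_, fun x hx => ?_⟩
  · obtain ⟨s, hs, hws⟩ := hbij.surjOn ⟨le_max_right x a, max_lt hx hab⟩
    filter_upwards [eventually_gt_atTop s] with t hst
    calc x ≤ separatedSolution g a b s := (le_max_left x a).trans_eq hws.symm
      _ < separatedSolution g a b t := hmono hs (hs.trans hst.le) hst
  · filter_upwards [eventually_ge_atTop 0] with t ht using (hbij.mapsTo ht).2.trans hx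

end

-- Osgood's criterion in the linear case: `∫ ds / (K * (b - s))` diverges logarithmically at `b`.
lemma tendsto_transitTime_of_le_mul_sub {K : ℝ} (hab : a < b)
    (hle : ∀ x ∈ Ico a b, g x ≤ K * (b - x)) : Tendsto (transitTime g a) (𝓝[<] b) atTop := by
  have hK : 0 < K :=
    pos_of_mul_pos_left ((hpos a (left_mem_Ico.2 hab)).trans_le (hle a (left_mem_Ico.2 hab)))
      (sub_pos.2 hab).le
  have hlower : ∀ x ∈ Ico a b, K⁻¹ * (Real.log (b - a) - Real.log (b - x)) ≤ transitTime g a x := by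
    intro x hx
    have hsub : Icc a x ⊆ Ico a b := Icc_subset_Ico_right hx.2
    have hcont : ContinuousOn (fun s => (K * (b - s))⁻¹) (Icc a x) :=
      ContinuousOn.inv₀ (by fun_prop) fun s hs => (mul_pos hK (sub_pos.2 (hsub hs).2)).ne'
    calc K⁻¹ * (Real.log (b - a) - Real.log (b - x))
        = ∫ s in a..x, (K * (b - s))⁻¹ := by
          simp only [mul_inv, intervalIntegral.integral_const_mul]
          rw [intervalIntegral.integral_comp_sub_left (fun s => s⁻¹),
            integral_inv_of_pos (sub_pos.2 hx.2) (sub_pos.2 hab),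
            Real.log_div (sub_pos.2 hab).ne' (sub_pos.2 hx.2).ne']
      _ ≤ transitTime g a x :=
          intervalIntegral.integral_mono_on hx.1 (hcont.intervalIntegrable_of_Icc hx.1)
            (((continuousOn_inv_of_pos hg hpos).mono hsub).intervalIntegrable_of_Icc hx.1)
            fun s hs => inv_anti₀ (hpos s (hsub hs)) (hle s (hsub hs))
  have hsub_tendsto : Tendsto (fun x => b - x) (𝓝[<] b) (𝓝[>] 0) := by
    refine tendsto_nhdsWithin_iff.2 ⟨?_, ?_⟩
    · exact ((continuous_const.sub continuous_id).tendsto' b 0 (sub_self b)).mono_left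
        nhdsWithin_le_nhds
    · filter_upwards [self_mem_nhdsWithin] with x hx using sub_pos.2 (mem_Iio.1 hx)
  have hlog : Tendsto (fun x => K⁻¹ * (Real.log (b - a) - Real.log (b - x))) (𝓝[<] b) atTop :=
    (tendsto_atTop_add_const_left _ _ (tendsto_neg_atBot_atTop.comp
      (Real.tendsto_log_nhdsGT_zero.comp hsub_tendsto))).const_mul_atTop (inv_pos.2 hK)
  refine tendsto_atTop_mono' _ ?_ hlog
  filter_upwards [Ico_mem_nhdsLT hab] with x hx using hlower x hx

end SeparationOfVariables

/-! ### Speed on the zero-energy level -/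

/-- The nonnegative velocity at position `s` of a trajectory of `u'' + f u = 0` that comes to rest
at `b`, as dictated by conservation of energy. -/
noncomputable def speed (f : ℝ → ℝ) (b s : ℝ) : ℝ := √(2 * ∫ τ in s..b, f τ)

section Speed

variable {f : ℝ → ℝ} {b : ℝ}

lemma hasDerivAt_integral_left (hf : Continuous f) (s : ℝ) :
    HasDerivAt (fun x => ∫ τ in x..b, f τ) (-f s) s :=
  intervalIntegral.integral_hasDerivAt_left (hf.intervalIntegrable s b)
    hf.stronglyMeasurable.stronglyMeasurableAtFilter hf.continuousAt

lemma continuous_speed (hf : Continuous f) : Continuous (speed f b) :=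
  (continuous_const.mul (continuous_iff_continuousAt.2 fun s =>
    (hasDerivAt_integral_left hf s).continuousAt)).sqrt

lemma speed_pos {s : ℝ} (hs : 0 < ∫ τ in s..b, f τ) : 0 < speed f b s :=
  Real.sqrt_pos.2 (mul_pos two_pos hs)

lemma hasDerivAt_speed (hf : Continuous f) {s : ℝ} (hs : 0 < ∫ τ in s..b, f τ) :
    HasDerivAt (speed f b) (-f s / speed f b s) s := by
  have hsqrt := ((hasDerivAt_integral_left hf s).const_mul 2).sqrt (mul_pos two_pos hs).ne'
  rwa [mul_div_mul_left _ _ two_ne_zero] at hsqrt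

lemma speed_le_mul_sub (hf : Continuous f) {K s : ℝ} (hsb : s ≤ b)
    (hle : ∀ τ ∈ Icc s b, f τ ≤ K * (b - τ)) : speed f b s ≤ √K * (b - s) := by
  have hint : ∫ τ in s..b, f τ ≤ K * ((b - s) ^ 2 / 2) := by
    calc ∫ τ in s..b, f τ ≤ ∫ τ in s..b, K * (b - τ) :=
          intervalIntegral.integral_mono_on hsb (hf.intervalIntegrable s b)
            (Continuous.intervalIntegrable (by fun_prop) s b) hle
      _ = K * ((b - s) ^ 2 / 2) := by
          rw [intervalIntegral.integral_const_mul,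
            intervalIntegral.integral_comp_sub_left (fun τ => τ), integral_id, sub_self]
          ring
  calc speed f b s ≤ √(K * (b - s) ^ 2) := Real.sqrt_le_sqrt (by linarith)
    _ = √K * (b - s) := by rw [Real.sqrt_mul' _ (sq_nonneg _), Real.sqrt_sq (sub_nonneg.2 hsb)]

end Speed

/-! ### Trajectories in the phase plane -/

/-- `(u, v)` solves the first-order system `u' = v`, `v' = -f u` equivalent to `u'' + f u = 0` on
`[0, ∞)`, with one-sided derivatives at time `0`. -/
structure IsTrajectory (f u v : ℝ → ℝ) : Prop where
  hasDerivWithinAt_position : ∀ t ∈ Ici (0 : ℝ), HasDerivWithinAt u (v t) (Ici 0) t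
  hasDerivWithinAt_velocity : ∀ t ∈ Ici (0 : ℝ), HasDerivWithinAt v (-f (u t)) (Ici 0) t

namespace IsTrajectory

variable {f u v : ℝ → ℝ} {a b : ℝ}

lemma continuousOn_position (h : IsTrajectory f u v) : ContinuousOn u (Ici 0) :=
  fun t ht => (h.hasDerivWithinAt_position t ht).continuousWithinAt

lemma continuousOn_velocity (h : IsTrajectory f u v) : ContinuousOn v (Ici 0) :=
  fun t ht => (h.hasDerivWithinAt_velocity t ht).continuousWithinAt

lemma contDiffOn_two (h : IsTrajectory f u v) (hf : Continuous f) : ContDiffOn ℝ 2 u (Ici 0) :=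
  contDiffOn_two_of_hasDerivWithinAt (uniqueDiffOn_Ici 0) h.hasDerivWithinAt_position
    h.hasDerivWithinAt_velocity (hf.comp_continuousOn h.continuousOn_position).neg

lemma derivWithin_derivWithin (h : IsTrajectory f u v) {t : ℝ} (ht : 0 ≤ t) :
    derivWithin (derivWithin u (Ici 0)) (Ici 0) t = -f (u t) := by
  have hu : EqOn (derivWithin u (Ici 0)) v (Ici 0) := fun s hs =>
    (h.hasDerivWithinAt_position s hs).derivWithin (uniqueDiffOn_Ici 0 s hs)
  rw [derivWithin_congr hu (hu ht)]
  exact (h.hasDerivWithinAt_velocity t ht).derivWithin (uniqueDiffOn_Ici 0 t ht)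

lemma energy_eq (h : IsTrajectory f u v) (hf : Continuous f) (b : ℝ) {t : ℝ} (ht : 0 ≤ t) :
    v t ^ 2 - 2 * ∫ τ in u t..b, f τ = v 0 ^ 2 - 2 * ∫ τ in u 0..b, f τ := by
  have hderiv : ∀ s ∈ Icc 0 t,
      HasDerivWithinAt (fun r => v r ^ 2 - 2 * ∫ τ in u r..b, f τ) 0 (Icc 0 t) s := by
    intro s hs
    have hkinetic := (h.hasDerivWithinAt_velocity s hs.1).pow 2
    have hpotential := ((hasDerivAt_integral_left (b := b) hf (u s)).comp_hasDerivWithinAt s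
      (h.hasDerivWithinAt_position s hs.1)).const_mul 2
    refine ((hkinetic.sub hpotential).congr_deriv ?_).mono Icc_subset_Ici_self
    push_cast
    ring
  exact constant_of_derivWithin_zero (fun s hs => (hderiv s hs).differentiableWithinAt)
    (fun s hs => (hderiv s (Ico_subset_Icc_self hs)).derivWithin
      (uniqueDiffOn_Icc (hs.1.trans_lt hs.2) s (Ico_subset_Icc_self hs))) t (right_mem_Icc.2 ht)

-- The conserved energy is a limit of `v ^ 2` at infinity, and `v` clusters at `0` there.
lemma sq_velocity_eq (h : IsTrajectory f u v) (hf : Continuous f) (hlim : Tendsto u atTop (𝓝 b))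
    {t : ℝ} (ht : 0 ≤ t) : v t ^ 2 = 2 * ∫ τ in u t..b, f τ := by
  set E : ℝ := v 0 ^ 2 - 2 * ∫ τ in u 0..b, f τ
  have hpotential : Tendsto (fun s => E + 2 * ∫ τ in u s..b, f τ) atTop (𝓝 E) := by
    have hcont := (hasDerivAt_integral_left (b := b) hf b).continuousAt.tendsto.comp hlim
    simpa using (hcont.const_mul 2).const_add E
  have hsq : Tendsto (fun s => v s ^ 2) atTop (𝓝 E) := by
    refine hpotential.congr' ?_
    filter_upwards [eventually_ge_atTop 0] with s hs
    linarith [h.energy_eq hf b hs]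
  have hcluster : MapClusterPt 0 atTop v := by
    refine mapClusterPt_zero_of_hasDerivAt ?_ hlim
    filter_upwards [eventually_gt_atTop 0] with s hs
    exact (h.hasDerivWithinAt_position s hs.le).hasDerivAt (Ici_mem_nhds hs)
  have hcluster_sq : MapClusterPt (0 ^ 2) atTop fun s => v s ^ 2 :=
    hcluster.continuousAt_comp (continuous_pow 2).continuousAt
  have hE_zero : E = 0 := by
    have : (𝓝 ((0 : ℝ) ^ 2) ⊓ 𝓝 E).NeBot := hcluster_sq.clusterPt.neBot.mono
      (inf_le_inf_left _ hsq)
    simpa using (eq_of_nhds_neBot this).symm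
  linarith [h.energy_eq hf b ht]

section Barrier

variable (h : IsTrajectory f u v) (hf : Continuous f)
  (hV : ∀ s ∈ Ico a b, 0 < ∫ τ in s..b, f τ) (hlim : Tendsto u atTop (𝓝 b)) (h0 : u 0 = a)

include h hf hV hlim h0

-- The velocity cannot vanish, hence keeps its sign, and `u` cannot descend below `u 0`.
lemma velocity_eqOn_speed {t : ℝ} (ht : 0 < t) (hmaps : MapsTo u (Icc 0 t) (Ico a b)) :
    EqOn v (speed f b ∘ u) (Icc 0 t) := by
  have hu : ContinuousOn u (Icc 0 t) := h.continuousOn_position.mono Icc_subset_Ici_self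
  have hsq : EqOn (v ^ 2) ((speed f b ∘ u) ^ 2) (Icc 0 t) := fun s hs => by
    simp only [Pi.pow_apply, Function.comp_apply, speed]
    rw [h.sq_velocity_eq hf hlim hs.1, Real.sq_sqrt (mul_pos two_pos (hV _ (hmaps hs))).le]
  refine (isPreconnected_Icc.eq_or_eq_neg_of_sq_eq
    (h.continuousOn_velocity.mono Icc_subset_Ici_self) ((continuous_speed hf).comp_continuousOn hu)
    hsq fun hs => (speed_pos (hV _ (hmaps hs))).ne').resolve_right fun hneg => ?_
  have hanti : StrictAntiOn u (Icc 0 t) :=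
    strictAntiOn_of_hasDerivWithinAt_neg (convex_Icc 0 t) hu
      (fun s hs => (h.hasDerivWithinAt_position s (interior_subset hs).1).mono
        (interior_subset.trans Icc_subset_Ici_self))
      fun s hs => by
        rw [hneg (interior_subset hs)]
        exact neg_neg_of_pos (speed_pos (hV _ (hmaps (interior_subset hs))))
  have hdescend := hanti (left_mem_Icc.2 ht.le) (right_mem_Icc.2 ht.le) ht
  exact (hdescend.trans_eq h0).not_ge (hmaps (right_mem_Icc.2 ht.le)).1

lemma transitTime_position {t : ℝ} (ht : 0 ≤ t) (hmaps : MapsTo u (Icc 0 t) (Ico a b)) :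
    transitTime (speed f b) a (u t) = t := by
  obtain rfl | ht_pos := ht.eq_or_lt
  · rw [h0, transitTime_self]
  · refine transitTime_eq_of_hasDerivWithinAt (continuous_speed hf).continuousOn
      (fun s hs => speed_pos (hV s hs)) ht (fun s hs => ?_) hmaps h0
    exact ((h.hasDerivWithinAt_position s hs.1).mono Icc_subset_Ici_self).congr_deriv
      (h.velocity_eqOn_speed hf hV hlim h0 ht_pos hmaps hs)

-- Up to the first arrival at `b` the transit time of `u s` is `s`, so it could not diverge.
lemma position_lt (hdiv : Tendsto (transitTime (speed f b) a) (𝓝[<] b) atTop) (hab : a < b)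
    (ha : ∀ t ∈ Ici (0 : ℝ), a ≤ u t) {t : ℝ} (ht : 0 ≤ t) : u t < b := by
  by_contra! hbt
  obtain ⟨τ, hτ, huτ, hlt⟩ := exists_first_hitting
    (h.continuousOn_position.mono Icc_subset_Ici_self) ht (h0.trans_lt hab) hbt
  have hu_cont : ContinuousAt u τ := h.continuousOn_position.continuousAt (Ici_mem_nhds hτ.1)
  have hu_tendsto : Tendsto u (𝓝[<] τ) (𝓝[<] b) := by
    refine tendsto_nhdsWithin_iff.2 ⟨huτ ▸ hu_cont.tendsto.mono_left nhdsWithin_le_nhds, ?_⟩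
    filter_upwards [Ico_mem_nhdsLT hτ.1] with s hs using hlt s hs
  have htime : (fun s => transitTime (speed f b) a (u s)) =ᶠ[𝓝[<] τ] id := by
    filter_upwards [Ico_mem_nhdsLT hτ.1] with s hs
    exact h.transitTime_position hf hV hlim h0 hs.1
      fun r hr => ⟨ha r hr.1, hlt r ⟨hr.1, hr.2.trans_lt hs.2⟩⟩
  exact not_tendsto_nhds_of_tendsto_atTop ((hdiv.comp hu_tendsto).congr' htime) τ
    (tendsto_id.mono_left nhdsWithin_le_nhds)

lemma eqOn_separatedSolution (hdiv : Tendsto (transitTime (speed f b) a) (𝓝[<] b) atTop)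
    (hab : a < b) (ha : ∀ t ∈ Ici (0 : ℝ), a ≤ u t) :
    EqOn u (separatedSolution (speed f b) a b) (Ici 0) := by
  intro t ht
  have hmem : ∀ s ∈ Ici (0 : ℝ), u s ∈ Ico a b := fun s hs =>
    ⟨ha s hs, h.position_lt hf hV hlim h0 hdiv hab ha hs⟩
  have hinv := (invOn_separatedSolution (continuous_speed hf).continuousOn
    (fun s hs => speed_pos (hV s hs)) hab hdiv).1 (hmem t ht)
  rwa [h.transitTime_position hf hV hlim h0 ht fun s hs => hmem s hs.1, eq_comm] at hinv

end Barrier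

end IsTrajectory

lemma isTrajectory_separatedSolution {f : ℝ → ℝ} {a b : ℝ} (hf : Continuous f)
    (hV : ∀ s ∈ Ico a b, 0 < ∫ τ in s..b, f τ) (hab : a < b)
    (hdiv : Tendsto (transitTime (speed f b) a) (𝓝[<] b) atTop) :
    IsTrajectory f (separatedSolution (speed f b) a b)
      (speed f b ∘ separatedSolution (speed f b) a b) := by
  have hg : ContinuousOn (speed f b) (Ico a b) := (continuous_speed hf).continuousOn
  have hpos : ∀ s ∈ Ico a b, 0 < speed f b s := fun s hs => speed_pos (hV s hs)
  have hw := fun t (ht : 0 ≤ t) => hasDerivWithinAt_separatedSolution hg hpos hab hdiv ht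
  refine ⟨hw, fun t ht => ?_⟩
  have hmem := (bijOn_separatedSolution hg hpos hab hdiv).mapsTo ht
  have hcomp := (hasDerivAt_speed hf (hV _ hmem)).comp_hasDerivWithinAt t (hw t ht)
  rwa [div_mul_cancel₀ _ (hpos _ hmem).ne'] at hcomp

/-! ### Heteroclinic solutions -/

namespace IsPosSolution

variable {f w : ℝ → ℝ}

lemma nonneg (h : IsPosSolution f w) {t : ℝ} (ht : 0 ≤ t) : 0 ≤ w t := by
  obtain ⟨-, -, h0, -, hpos⟩ := h
  obtain rfl | ht_pos := ht.eq_or_lt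
  · exact h0.ge
  · exact (hpos t ht_pos).le

lemma isTrajectory (h : IsPosSolution f w) (hf : Continuous f) :
    IsTrajectory f w (derivWithin w (Ici 0)) := by
  obtain ⟨hC2, hode, -⟩ := h
  rw [← one_add_one_eq_two, contDiffOn_succ_iff_derivWithin (uniqueDiffOn_Ici 0)] at hC2
  obtain ⟨hdiff, -, hC1⟩ := hC2
  have hode_Ici : EqOn (derivWithin (derivWithin w (Ici 0)) (Ici 0)) (fun t => -f (w t)) (Ici 0) :=
    EqOn.of_subset_closure (fun t ht => eq_neg_of_add_eq_zero_left (hode t ht))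
      (hC1.continuousOn_derivWithin (uniqueDiffOn_Ici 0) le_rfl)
      (hf.comp_continuousOn hdiff.continuousOn).neg Ioi_subset_Ici_self (closure_Ioi 0).ge
  refine ⟨fun t ht => (hdiff t ht).hasDerivWithinAt, fun t ht => ?_⟩
  exact (hC1.differentiableOn one_ne_zero t ht).hasDerivWithinAt.congr_deriv (hode_Ici ht)

end IsPosSolution

namespace Monostable

variable {f : ℝ → ℝ}

lemma continuous (hf : Monostable f) : Continuous f := hf.1.continuous

lemma integral_pos (hf : Monostable f) {s : ℝ} (hs : s ∈ Ico 0 1) : 0 < ∫ τ in s..1, f τ := by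
  obtain ⟨hsmooth, -, -, hpos, -⟩ := hf
  exact intervalIntegral.intervalIntegral_pos_of_pos_on (hsmooth.continuous.intervalIntegrable s 1)
    (fun τ hτ => hpos τ ⟨hs.1.trans_lt hτ.1, hτ.2⟩) hs.2

lemma exists_le_mul_one_sub (hf : Monostable f) : ∃ K : ℝ, ∀ s ∈ Icc 0 1, f s ≤ K * (1 - s) := by
  obtain ⟨hsmooth, -, h1, -, -⟩ := hf
  have hloc : LocallyLipschitz f := (hsmooth.of_le (by simp)).locallyLipschitz
  obtain ⟨K, hK⟩ := (hloc.locallyLipschitzOn (s := Icc 0 1)).exists_lipschitzOnWith_of_compact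
    isCompact_Icc
  refine ⟨K, fun s hs => (le_abs_self (f s)).trans ?_⟩
  simpa [Real.dist_eq, h1, abs_sub_comm s, abs_of_nonneg (sub_nonneg.2 hs.2)] using
    hK.dist_le_mul s hs 1 (right_mem_Icc.2 zero_le_one)

lemma tendsto_transitTime (hf : Monostable f) :
    Tendsto (transitTime (speed f 1) 0) (𝓝[<] 1) atTop := by
  obtain ⟨K, hK⟩ := hf.exists_le_mul_one_sub
  exact tendsto_transitTime_of_le_mul_sub (continuous_speed hf.continuous).continuousOn
    (fun s hs => speed_pos (hf.integral_pos hs)) zero_lt_one fun s hs =>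
      speed_le_mul_sub hf.continuous hs.2.le fun τ hτ => hK τ ⟨hs.1.trans hτ.1, hτ.2⟩

end Monostable

theorem heteroclinic_exists_unique_general (f : ℝ → ℝ) (hf : Continuous f)
    (hV : ∀ s ∈ Ico (0 : ℝ) 1, 0 < ∫ τ in s..(1 : ℝ), f τ)
    (hdiv : Tendsto (transitTime (speed f 1) 0) (𝓝[<] 1) atTop) :
    ∃ w : ℝ → ℝ,
      IsPosSolution f w ∧
      (∀ w₂ : ℝ → ℝ, IsPosSolution f w₂ → EqOn w₂ w (Ici 0)) ∧
      StrictMonoOn w (Ici 0) ∧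
      (∀ t ∈ Ioi (0 : ℝ), 0 < w t ∧ w t < 1) ∧
      (∀ t ∈ Ici (0 : ℝ), t = transitTime (speed f 1) 0 (w t)) := by
  have hg : ContinuousOn (speed f 1) (Ico 0 1) := (continuous_speed hf).continuousOn
  have hpos : ∀ s ∈ Ico (0 : ℝ) 1, 0 < speed f 1 s := fun s hs => speed_pos (hV s hs)
  have htraj := isTrajectory_separatedSolution hf hV zero_lt_one hdiv
  have hmono := strictMonoOn_separatedSolution hg hpos zero_lt_one hdiv
  have hmaps := (bijOn_separatedSolution hg hpos zero_lt_one hdiv).mapsTo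
  have hzero := separatedSolution_zero hg hpos zero_lt_one hdiv
  have hw_pos : ∀ t ∈ Ioi (0 : ℝ), 0 < separatedSolution (speed f 1) 0 1 t := fun t ht =>
    hzero.symm.trans_lt (hmono self_mem_Ici (Ioi_subset_Ici_self ht) ht)
  refine ⟨separatedSolution (speed f 1) 0 1, ⟨htraj.contDiffOn_two hf, fun t ht => ?_, hzero,
    tendsto_separatedSolution hg hpos zero_lt_one hdiv, hw_pos⟩, fun w₂ hw₂ => ?_, hmono,
    fun t ht => ⟨hw_pos t ht, (hmaps (Ioi_subset_Ici_self ht)).2⟩,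
    fun t ht => ((invOn_separatedSolution hg hpos zero_lt_one hdiv).2 ht).symm⟩
  · rw [htraj.derivWithin_derivWithin (le_of_lt ht), neg_add_cancel]
  · have ⟨_, _, hw₂_zero, hw₂_lim, _⟩ := hw₂
    exact (hw₂.isTrajectory hf).eqOn_separatedSolution hf hV hw₂_lim hw₂_zero hdiv zero_lt_one
      fun t ht => hw₂.nonneg ht

/-- For a monostable `f` there is a unique positive `C²` solution of
`w'' + f(w) = 0` on `(0,∞)` with `w(0)=0`, `w(+∞)=1`; it is strictly increasing, takes
values in `(0,1)` on `(0,∞)`, and satisfies the implicit formula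
`t = ∫₀^{w(t)} ds / √(2 ∫_s^1 f)`. -/
theorem heteroclinic_exists_unique (f : ℝ → ℝ) (hf : Monostable f) :
    ∃ w : ℝ → ℝ,
      IsPosSolution f w ∧
      (∀ w₂ : ℝ → ℝ, IsPosSolution f w₂ → Set.EqOn w₂ w (Set.Ici 0)) ∧
      StrictMonoOn w (Set.Ici 0) ∧
      (∀ t ∈ Set.Ioi (0 : ℝ), 0 < w t ∧ w t < 1) ∧
      (∀ t ∈ Set.Ici (0 : ℝ),
        t = ∫ s in (0 : ℝ)..(w t), (Real.sqrt (2 * ∫ τ in s..(1 : ℝ), f τ))⁻¹) :=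
  heteroclinic_exists_unique_general f hf.continuous (fun _ hs => hf.integral_pos hs)
    hf.tendsto_transitTime
end

section
/- Let f be a monostable nonlinearity and w the associated heteroclinic. Let q : [0,∞) → ℝ be bounded and continuous, and let p(t) = w'(t) · ∫₀^t (1/w'(τ)²) ( ∫₀^τ w'(s) q(s) ds ) dτ be the solution of p'' + f'(w(t)) p = q on (0,∞) with p(0) = p'(0) = 0. Then p is bounded on [0,∞) if and only if ∫₀^∞ q(t) w'(t) dt = 0. -/
open Set Filter MeasureTheory

/-- The heteroclinic associated with `f`. -/
def IsHeteroclinic (f w : ℝ → ℝ) : Prop :=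
  ContDiffOn ℝ 2 w (Set.Ici 0) ∧
  (∀ t ∈ Set.Ioi (0 : ℝ),
    derivWithin (derivWithin w (Set.Ici 0)) (Set.Ici 0) t + f (w t) = 0) ∧
  w 0 = 0 ∧
  Filter.Tendsto w Filter.atTop (nhds 1) ∧
  (∀ t ∈ Set.Ioi (0 : ℝ), 0 < w t) ∧
  StrictMonoOn w (Set.Ici 0) ∧
  (∀ t ∈ Set.Ici (0 : ℝ), 0 < derivWithin w (Set.Ici 0) t)

/-!
Put `v = w'`, so that `v'' + f'(w) v = 0`, and let `W t = ∫₀ᵗ v q`. The Wronskian of `v` and `p` is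
`W`, so `p = I / u` where `u = 1 / v` tends to infinity and `I' = W / v²`, `u' = f(w) / v²`.
As in l'Hôpital's rule, the boundedness of `p` is decided by the quotient `I' / u' = W / f(w)`.
The limit of `W` is `L = ∫₀^∞ v q`, whereas `f(w) → 0`, so `|p| → ∞` if `L ≠ 0`. If `L = 0`, then
`W t = -∫ₜ^∞ v q = O(1 - w t)`, and `1 - w = O(f(w))` because `f'(1) ≠ 0`.
-/

open Asymptotics Topology

section GrowthComparison

variable {E : Type*} [NormedAddCommGroup E]

theorem exists_norm_le_Ici_iff_isBigO_one {g : ℝ → E} {a : ℝ} (hg : ContinuousOn g (Ici a)) :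
    (∃ M, ∀ t ∈ Ici a, ‖g t‖ ≤ M) ↔ g =O[atTop] (1 : ℝ → ℝ) := by
  constructor
  · rintro ⟨M, hM⟩
    exact IsBigO.of_bound M <| (eventually_ge_atTop a).mono fun t ht => by simpa using hM t ht
  · intro hO
    obtain ⟨M₁, hM₁⟩ := hO.bound
    obtain ⟨T, hT⟩ := eventually_atTop.1 hM₁
    obtain ⟨M₂, hM₂⟩ := isCompact_Icc.exists_bound_of_continuousOn
      (hg.mono (Icc_subset_Ici_self : Icc a T ⊆ Ici a))
    refine ⟨max M₁ M₂, fun t ht => ?_⟩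
    rcases le_total T t with hTt | htT
    · exact le_max_of_le_left (by simpa using hT t hTt)
    · exact le_max_of_le_right (hM₂ t ⟨ht, htT⟩)

theorem isBigO_atTop_of_deriv_isBigO [NormedSpace ℝ E] {g g' : ℝ → E} {u u' : ℝ → ℝ}
    (hg : ∀ᶠ t in atTop, HasDerivAt g (g' t) t) (hu : ∀ᶠ t in atTop, HasDerivAt u (u' t) t)
    (hu' : ∀ᶠ t in atTop, 0 ≤ u' t) (hgu : g' =O[atTop] u') (hlim : Tendsto u atTop atTop) :
    g =O[atTop] u := by
  obtain ⟨C, hC⟩ := hgu.bound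
  obtain ⟨T, hT⟩ := eventually_atTop.1 (hg.and (hu.and (hu'.and hC)))
  have norm_sub_le : ∀ t ≥ T, ‖g t - g T‖ ≤ C * (u t - u T) := fun t ht =>
    image_norm_le_of_norm_deriv_right_le_deriv_boundary' (f := fun s => g s - g T) (f' := g')
      (B := fun s => C * (u s - u T)) (B' := fun s => C * u' s)
      (fun s hs => ((hT s hs.1).1.continuousAt.sub continuousAt_const).continuousWithinAt)
      (fun s hs => ((hT s hs.1).1.sub_const _).hasDerivWithinAt)
      (by simp)
      (fun s hs => (((hT s hs.1).2.1.continuousAt.sub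
        continuousAt_const).const_mul C).continuousWithinAt)
      (fun s hs => (((hT s hs.1).2.1.sub_const _).const_mul C).hasDerivWithinAt)
      (fun s hs => by
        obtain ⟨-, -, hpos, hle⟩ := hT s hs.1
        rwa [Real.norm_of_nonneg hpos] at hle)
      ⟨ht, le_rfl⟩
  have affine_isBigO : (fun t => C * u t + (‖g T‖ - C * u T)) =O[atTop] u :=
    ((isBigO_refl u atTop).const_mul_left C).add
      (isLittleO_const_left.2 (.inr (tendsto_norm_atTop_atTop.comp hlim))).isBigO
  refine (IsBigO.of_norm_eventuallyLE ?_).trans affine_isBigO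
  filter_upwards [eventually_ge_atTop T] with t ht
  linarith [norm_sub_le t ht, norm_sub_norm_le (g t) (g T)]

theorem tendsto_atTop_of_deriv_le_deriv {g g' u u' : ℝ → ℝ}
    (hg : ∀ᶠ t in atTop, HasDerivAt g (g' t) t) (hu : ∀ᶠ t in atTop, HasDerivAt u (u' t) t)
    (hle : ∀ᶠ t in atTop, u' t ≤ g' t) (hlim : Tendsto u atTop atTop) :
    Tendsto g atTop atTop := by
  obtain ⟨T, hT⟩ := eventually_atTop.1 (hg.and (hu.and hle))
  have hderiv : ∀ t ≥ T, HasDerivAt (fun s => g s - u s) (g' t - u' t) t := fun t ht =>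
    (hT t ht).1.sub (hT t ht).2.1
  have sub_monotone : MonotoneOn (fun s => g s - u s) (Ici T) :=
    monotoneOn_of_hasDerivWithinAt_nonneg (convex_Ici T)
      (fun t ht => (hderiv t ht).continuousAt.continuousWithinAt)
      (fun t ht => (hderiv t (interior_subset ht)).hasDerivWithinAt)
      (fun t ht => sub_nonneg.2 (hT t (interior_subset ht)).2.2)
  refine tendsto_atTop_mono' atTop ?_ (tendsto_atTop_add_const_right atTop (g T - u T) hlim)
  filter_upwards [eventually_ge_atTop T] with t ht
  linarith [sub_monotone self_mem_Ici ht ht]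

theorem eventually_antitoneOn_Ici_of_deriv_nonpos {v v' : ℝ → ℝ}
    (hv : ∀ᶠ t in atTop, HasDerivAt v (v' t) t) (hv' : ∀ᶠ t in atTop, v' t ≤ 0) :
    ∀ᶠ b in atTop, AntitoneOn v (Ici b) := by
  filter_upwards [eventually_forall_ge_atTop.2 (hv.and hv')] with b hb
  exact antitoneOn_of_hasDerivWithinAt_nonpos (convex_Ici b)
    (fun t ht => (hb t ht).1.continuousAt.continuousWithinAt)
    (fun t ht => (hb t (interior_subset ht)).1.hasDerivWithinAt)
    (fun t ht => (hb t (interior_subset ht)).2)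

theorem tendsto_deriv_zero_of_antitoneOn {w v : ℝ → ℝ} {a l : ℝ}
    (hw : ∀ t ∈ Ici a, HasDerivAt w (v t) t) (hv : AntitoneOn v (Ici a))
    (hlim : Tendsto w atTop (𝓝 l)) : Tendsto v atTop (𝓝 0) := by
  have hslope : ∀ s ∈ Ici a, ∃ c ∈ Ioo s (s + 1), v c = w (s + 1) - w s := fun s hs => by
    simpa using exists_hasDerivAt_eq_slope w v (lt_add_one s)
      (fun x hx => (hw x (hs.trans hx.1)).continuousAt.continuousWithinAt)
      (fun x hx => hw x (hs.trans hx.1.le))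
  have hdiff : Tendsto (fun t => w (t + 1) - w t) atTop (𝓝 0) := by
    simpa using (hlim.comp (tendsto_atTop_add_const_right atTop 1 tendsto_id)).sub hlim
  refine tendsto_of_tendsto_of_tendsto_of_le_of_le' hdiff
    (hdiff.comp (tendsto_atTop_add_const_right atTop (-1) tendsto_id)) ?_ ?_
  · filter_upwards [eventually_ge_atTop a] with t ht
    obtain ⟨c, hc, hvc⟩ := hslope t ht
    exact hvc ▸ hv ht (ht.trans hc.1.le) hc.1.le
  · filter_upwards [eventually_ge_atTop (a + 1)] with t ht
    obtain ⟨c, hc, hvc⟩ := hslope (t - 1) (le_sub_iff_add_le.2 ht)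
    rw [sub_add_cancel] at hc hvc
    simp only [Function.comp_apply, id_eq, ← sub_eq_add_neg, sub_add_cancel]
    exact hvc ▸ hv ((le_sub_iff_add_le.2 ht).trans hc.1.le)
      ((le_sub_iff_add_le.2 ht).trans (by linarith)) hc.2.le

end GrowthComparison

section HalfLinePrimitive

variable {E : Type*} [NormedAddCommGroup E] {g : ℝ → E} {a t : ℝ}

theorem intervalIntegrable_of_locallyIntegrableOn_Ici (hg : LocallyIntegrableOn g (Ici a))
    (ht : a ≤ t) : IntervalIntegrable g volume a t :=
  (intervalIntegrable_iff_integrableOn_Icc_of_le ht).2 <|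
    hg.integrableOn_compact_subset Icc_subset_Ici_self isCompact_Icc

variable [NormedSpace ℝ E]

theorem continuousOn_primitive_Ici (hg : LocallyIntegrableOn g (Ici a)) :
    ContinuousOn (fun t => ∫ s in a..t, g s) (Ici a) := by
  intro t (ht : a ≤ t)
  have hIcc : ContinuousOn (fun t => ∫ s in a..t, g s) (Icc a (t + 1)) := by
    rw [← uIcc_of_le (by linarith)]
    exact intervalIntegral.continuousOn_primitive_interval'
      (intervalIntegrable_of_locallyIntegrableOn_Ici hg (by linarith)) left_mem_uIcc
  exact (hIcc t ⟨ht, by linarith⟩).mono_of_mem_nhdsWithin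
    (inter_mem_nhdsWithin _ (Iic_mem_nhds (lt_add_one t)))

theorem hasDerivAt_primitive_Ici [CompleteSpace E] (hg : ContinuousOn g (Ici a)) (ht : a < t) :
    HasDerivAt (fun t => ∫ s in a..t, g s) (g t) t :=
  intervalIntegral.integral_hasDerivAt_right
    (intervalIntegrable_of_locallyIntegrableOn_Ici
      (hg.locallyIntegrableOn measurableSet_Ici) ht.le)
    ((hg.mono Ioi_subset_Ici_self).stronglyMeasurableAtFilter isOpen_Ioi t ht)
    (hg.continuousAt (Ici_mem_nhds ht))

end HalfLinePrimitive

/-- The function `p` on `[a, ∞)` with `p a = 0` whose Wronskian `v p' - v' p` with the positive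
function `v` is `W`, found by integrating `(p / v)' = W / v ^ 2`. When `v` solves
`v'' + c v = 0` and `W' = v q`, it is the variation-of-parameters solution of `p'' + c p = q`. -/
noncomputable def ofWronskian (a : ℝ) (v W : ℝ → ℝ) (t : ℝ) : ℝ :=
  v t * ∫ τ in a..t, ((v τ) ^ 2)⁻¹ * W τ

namespace ofWronskian

variable {a : ℝ} {v v' W : ℝ → ℝ}

theorem continuousOn_integrand (hv : ContinuousOn v (Ici a)) (hpos : ∀ t ∈ Ici a, 0 < v t)
    (hW : ContinuousOn W (Ici a)) : ContinuousOn (fun τ => ((v τ) ^ 2)⁻¹ * W τ) (Ici a) :=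
  ((hv.pow 2).inv₀ fun t ht => (pow_pos (hpos t ht) 2).ne').mul hW

theorem continuousOn (hv : ContinuousOn v (Ici a)) (hpos : ∀ t ∈ Ici a, 0 < v t)
    (hW : ContinuousOn W (Ici a)) : ContinuousOn (ofWronskian a v W) (Ici a) :=
  hv.mul <| continuousOn_primitive_Ici <|
    (continuousOn_integrand hv hpos hW).locallyIntegrableOn measurableSet_Ici

theorem eventually_hasDerivAt_integral (hv : ContinuousOn v (Ici a))
    (hpos : ∀ t ∈ Ici a, 0 < v t) (hW : ContinuousOn W (Ici a)) :
    ∀ᶠ t in atTop, HasDerivAt (fun t => ∫ τ in a..t, ((v τ) ^ 2)⁻¹ * W τ)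
      (((v t) ^ 2)⁻¹ * W t) t :=
  (eventually_gt_atTop a).mono fun _ ht =>
    hasDerivAt_primitive_Ici (continuousOn_integrand hv hpos hW) ht

theorem eventually_hasDerivAt_inv (hpos : ∀ t ∈ Ici a, 0 < v t)
    (hv' : ∀ᶠ t in atTop, HasDerivAt v (v' t) t) :
    ∀ᶠ t in atTop, HasDerivAt v⁻¹ (((v t) ^ 2)⁻¹ * -v' t) t := by
  filter_upwards [hv', eventually_ge_atTop a] with t hvt hat
  simpa only [div_eq_inv_mul] using hvt.inv (hpos t hat).ne'

theorem tendsto_inv_atTop (hpos : ∀ t ∈ Ici a, 0 < v t) (hv0 : Tendsto v atTop (𝓝 0)) :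
    Tendsto v⁻¹ atTop atTop :=
  (tendsto_nhdsWithin_iff.2
    ⟨hv0, (eventually_ge_atTop a).mono hpos⟩).inv_tendsto_nhdsGT_zero

theorem isBigO_one (hv : ContinuousOn v (Ici a)) (hpos : ∀ t ∈ Ici a, 0 < v t)
    (hv' : ∀ᶠ t in atTop, HasDerivAt v (v' t) t) (hv0 : Tendsto v atTop (𝓝 0))
    (hanti : ∀ᶠ t in atTop, v' t ≤ 0) (hW : ContinuousOn W (Ici a)) (hWv : W =O[atTop] v') :
    ofWronskian a v W =O[atTop] (1 : ℝ → ℝ) := by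
  have integral_isBigO : (fun t => ∫ τ in a..t, ((v τ) ^ 2)⁻¹ * W τ) =O[atTop] v⁻¹ :=
    isBigO_atTop_of_deriv_isBigO (eventually_hasDerivAt_integral hv hpos hW)
      (eventually_hasDerivAt_inv hpos hv')
      (hanti.mono fun t ht => mul_nonneg (by positivity) (neg_nonneg.2 ht))
      ((isBigO_refl _ _).mul hWv.neg_right) (tendsto_inv_atTop hpos hv0)
  refine ((isBigO_refl v atTop).mul integral_isBigO).congr' .rfl ?_
  filter_upwards [eventually_ge_atTop a] with t ht
  exact mul_inv_cancel₀ (hpos t ht).ne'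

theorem limit_eq_zero_of_isBigO_one {L : ℝ} (hv : ContinuousOn v (Ici a))
    (hpos : ∀ t ∈ Ici a, 0 < v t) (hv' : ∀ᶠ t in atTop, HasDerivAt v (v' t) t)
    (hv0 : Tendsto v atTop (𝓝 0)) (hv'0 : Tendsto v' atTop (𝓝 0))
    (hW : ContinuousOn W (Ici a)) (hWL : Tendsto W atTop (𝓝 L))
    (hbdd : ofWronskian a v W =O[atTop] (1 : ℝ → ℝ)) : L = 0 := by
  by_contra hL
  obtain ⟨B, hB⟩ := hbdd.bound
  set I : ℝ → ℝ := fun t => ∫ τ in a..t, ((v τ) ^ 2)⁻¹ * W τ with hI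
  have hinv := eventually_hasDerivAt_inv hpos hv'
  -- `L I` outgrows every multiple of `1 / v`, because `L W` stays positive while `v'` vanishes.
  have forcing_dominates : ∀ᶠ t in atTop, (1 + |L| * B) * -v' t < L * W t := by
    refine Tendsto.eventually_lt (hv'0.neg.const_mul _) (hWL.const_mul L) ?_
    simpa using hL
  have gap_tendsto : Tendsto (fun t => L * I t - |L| * B * v⁻¹ t) atTop atTop := by
    refine tendsto_atTop_of_deriv_le_deriv
      (g' := fun t => L * (((v t) ^ 2)⁻¹ * W t) - |L| * B * (((v t) ^ 2)⁻¹ * -v' t))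
      ?_ hinv ?_ (tendsto_inv_atTop hpos hv0)
    · filter_upwards [eventually_hasDerivAt_integral hv hpos hW, hinv] with t hIt hvt
      exact (hIt.const_mul L).sub (hvt.const_mul _)
    · filter_upwards [forcing_dominates] with t ht
      have := mul_le_mul_of_nonneg_left ht.le (inv_nonneg.2 (sq_nonneg (v t)))
      linarith
  obtain ⟨t, hgap, hBt, hat⟩ :=
    ((gap_tendsto.eventually_gt_atTop 0).and (hB.and (eventually_ge_atTop a))).exists
  have hvt := hpos t hat
  have integral_le : |I t| ≤ B * v⁻¹ t := by
    rw [Pi.inv_apply, ← div_eq_mul_inv, le_div_iff₀ hvt]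
    simpa [ofWronskian, hI, abs_mul, abs_of_pos hvt, mul_comm] using hBt
  have : L * I t ≤ |L| * (B * v⁻¹ t) := (le_abs_self _).trans <| by
    rw [abs_mul]
    gcongr
  linarith

end ofWronskian

theorem lt_of_strictMonoOn_Ici_of_tendsto {α β : Type*} [LinearOrder α] [NoMaxOrder α]
    [Preorder β] [TopologicalSpace β] [ClosedIciTopology β] {w : α → β} {a t : α} {l : β}
    (hw : StrictMonoOn w (Ici a)) (hlim : Tendsto w atTop (𝓝 l)) (ht : t ∈ Ici a) : w t < l := by
  obtain ⟨b, hb⟩ := exists_gt t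
  have : Nonempty α := ⟨t⟩
  have hba : b ∈ Ici a := le_trans ht hb.le
  refine (hw ht hba hb).trans_le (ge_of_tendsto hlim ?_)
  filter_upwards [eventually_ge_atTop b] with s hs
  exact hw.monotoneOn hba (hba.trans hs) hs

theorem sub_isBigO_comp_of_deriv_ne_zero {f w : ℝ → ℝ} {l : ℝ} (hf : deriv f l ≠ 0)
    (hfl : f l = 0) (hlim : Tendsto w atTop (𝓝 l)) :
    (fun t => l - w t) =O[atTop] fun t => f (w t) := by
  have hderiv : HasDerivAt f (deriv f l) l := (differentiableAt_of_deriv_ne_zero hf).hasDerivAt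
  have hO := (HasDerivAtFilter.isTheta_sub hderiv hf).isBigO_symm.comp_tendsto
    (hlim.prodMk (tendsto_pure.2 (.of_forall fun _ => rfl)))
  simpa [Function.comp_def, hfl] using hO.neg_left

theorem abs_integral_mul_le {α : Type*} [MeasurableSpace α] {μ : Measure α} {v q : α → ℝ} {M : ℝ}
    (hv : Integrable v μ) (hpos : ∀ᵐ t ∂μ, 0 ≤ v t) (hq : ∀ᵐ t ∂μ, |q t| ≤ M) :
    |∫ t, v t * q t ∂μ| ≤ M * ∫ t, v t ∂μ := by
  rw [← integral_const_mul, ← Real.norm_eq_abs]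
  refine norm_integral_le_of_norm_le (hv.const_mul M) ?_
  filter_upwards [hpos, hq] with t hvt hqt
  rw [norm_mul, Real.norm_of_nonneg hvt, mul_comm]
  exact mul_le_mul_of_nonneg_right hqt hvt

/-- `w` is an increasing solution of `w'' + f(w) = 0` on `[a, ∞)` with limit `l`, its derivative `v`
being carried along. This keeps only the part of being a heteroclinic that governs the behaviour
at infinity. -/
structure IsIncreasingSolution (f w v : ℝ → ℝ) (a l : ℝ) : Prop where
  hasDerivWithinAt : ∀ t ∈ Ici a, HasDerivWithinAt w (v t) (Ici a) t
  hasDerivAt_deriv : ∀ t ∈ Ioi a, HasDerivAt v (-f (w t)) t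
  continuousOn_deriv : ContinuousOn v (Ici a)
  deriv_pos : ∀ t ∈ Ici a, 0 < v t
  tendsto : Tendsto w atTop (𝓝 l)

namespace IsIncreasingSolution

variable {f w v q : ℝ → ℝ} {a l : ℝ}

theorem continuousOn (h : IsIncreasingSolution f w v a l) : ContinuousOn w (Ici a) :=
  fun t ht => (h.hasDerivWithinAt t ht).continuousWithinAt

theorem hasDerivAt (h : IsIncreasingSolution f w v a l) : ∀ t ∈ Ioi a, HasDerivAt w (v t) t :=
  fun t ht => (h.hasDerivWithinAt t (Ioi_subset_Ici_self ht)).hasDerivAt (Ici_mem_nhds ht)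

theorem deriv_nonneg (h : IsIncreasingSolution f w v a l) : ∀ t ∈ Ioi a, 0 ≤ v t :=
  fun t ht => (h.deriv_pos t (Ioi_subset_Ici_self ht)).le

theorem strictMonoOn (h : IsIncreasingSolution f w v a l) : StrictMonoOn w (Ici a) :=
  strictMonoOn_of_hasDerivWithinAt_pos (convex_Ici a) h.continuousOn
    (fun t ht => (h.hasDerivWithinAt t (interior_subset ht)).mono interior_subset)
    (fun t ht => h.deriv_pos t (interior_subset ht))

theorem integrableOn_deriv (h : IsIncreasingSolution f w v a l) : IntegrableOn v (Ioi a) :=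
  integrableOn_Ioi_deriv_of_nonneg (h.continuousOn a self_mem_Ici) h.hasDerivAt h.deriv_nonneg
    h.tendsto

theorem eventually_comp_pos (h : IsIncreasingSolution f w v a l) (hf : deriv f l < 0)
    (hfl : f l = 0) : ∀ᶠ t in atTop, 0 < f (w t) := by
  filter_upwards [h.tendsto.eventually (eventually_nhdsWithin_sign_eq_of_deriv_neg hf hfl),
    eventually_ge_atTop a] with t hsign ht
  have hwt : w t < l := lt_of_strictMonoOn_Ici_of_tendsto h.strictMonoOn h.tendsto ht
  rwa [sign_pos (sub_pos.2 hwt), sign_eq_one_iff] at hsign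

theorem tendsto_deriv_zero (h : IsIncreasingSolution f w v a l)
    (hpos : ∀ᶠ t in atTop, 0 < f (w t)) : Tendsto v atTop (𝓝 0) := by
  obtain ⟨b, hanti, hb⟩ := ((eventually_antitoneOn_Ici_of_deriv_nonpos
    ((eventually_gt_atTop a).mono h.hasDerivAt_deriv)
    (hpos.mono fun t ht => (neg_neg_of_pos ht).le)).and (eventually_gt_atTop a)).exists
  exact tendsto_deriv_zero_of_antitoneOn (fun t ht => h.hasDerivAt t (hb.trans_le ht)) hanti
    h.tendsto

theorem primitive_sub_integral_isBigO {M : ℝ} (h : IsIncreasingSolution f w v a l)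
    (hvq : IntegrableOn (fun t => v t * q t) (Ioi a))
    (hq : ∀ᵐ t ∂volume.restrict (Ioi a), |q t| ≤ M) :
    (fun τ => (∫ s in a..τ, v s * q s) - ∫ s in Ioi a, v s * q s) =O[atTop]
      fun τ => l - w τ := by
  refine (IsBigO.of_norm_eventuallyLE (g := fun τ => M * (l - w τ)) ?_).trans
    ((isBigO_refl _ _).const_mul_left M)
  filter_upwards [eventually_gt_atTop a] with τ hτ
  have hsub : Ioi τ ⊆ Ioi a := Ioi_subset_Ioi hτ.le
  have hv : IntegrableOn v (Ioi τ) := h.integrableOn_deriv.mono_set hsub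
  have tail_eq : ∫ s in Ioi τ, v s = l - w τ :=
    integral_Ioi_of_hasDerivAt_of_tendsto' (fun t ht => h.hasDerivAt t (hτ.trans_le ht))
      hv h.tendsto
  rw [← intervalIntegral.integral_interval_add_Ioi hvq (hvq.mono_set hsub), sub_add_cancel_left,
    norm_neg, ← tail_eq]
  exact abs_integral_mul_le hv
    (ae_restrict_of_forall_mem measurableSet_Ioi fun t ht => h.deriv_nonneg t (hsub ht))
    (ae_restrict_of_ae_restrict_of_subset hsub hq)

end IsIncreasingSolution

theorem bounded_iff_orthogonal_general {f w v q : ℝ → ℝ} {a l : ℝ}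
    (h : IsIncreasingSolution f w v a l) (hf : deriv f l < 0) (hfl : f l = 0)
    (hq : AEStronglyMeasurable q (volume.restrict (Ioi a)))
    (hqb : ∃ M, ∀ᵐ t ∂volume.restrict (Ioi a), |q t| ≤ M) :
    (∃ M, ∀ t ∈ Ici a, |ofWronskian a v (fun τ => ∫ s in a..τ, v s * q s) t| ≤ M) ↔
      ∫ t in Ioi a, q t * v t = 0 := by
  obtain ⟨M, hM⟩ := hqb
  have hvq : IntegrableOn (fun t => v t * q t) (Ioi a) := h.integrableOn_deriv.mul_bdd hq hM
  have hW : ContinuousOn (fun τ => ∫ s in a..τ, v s * q s) (Ici a) :=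
    continuousOn_primitive_Ici <|
      ((integrableOn_Ici_iff_integrableOn_Ioi (by finiteness)).2 hvq).locallyIntegrableOn
  have hpos := h.eventually_comp_pos hf hfl
  have hv' := (eventually_gt_atTop a).mono h.hasDerivAt_deriv
  have hv0 := h.tendsto_deriv_zero hpos
  have hv'0 : Tendsto (fun t => -f (w t)) atTop (𝓝 0) := by
    have hcont : ContinuousAt f l := (differentiableAt_of_deriv_ne_zero hf.ne).continuousAt
    simpa only [Function.comp_def, hfl, neg_zero] using (hcont.tendsto.comp h.tendsto).neg
  simp only [mul_comm (q _), ← Real.norm_eq_abs]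
  rw [exists_norm_le_Ici_iff_isBigO_one (ofWronskian.continuousOn h.continuousOn_deriv
    h.deriv_pos hW)]
  constructor
  · exact ofWronskian.limit_eq_zero_of_isBigO_one h.continuousOn_deriv h.deriv_pos hv' hv0
      hv'0 hW (intervalIntegral_tendsto_integral_Ioi a hvq tendsto_id)
  · intro horth
    refine ofWronskian.isBigO_one h.continuousOn_deriv h.deriv_pos hv' hv0
      (hpos.mono fun t ht => (neg_neg_of_pos ht).le) hW ?_
    have hWO := h.primitive_sub_integral_isBigO hvq hM
    simp only [horth, sub_zero] at hWO
    exact (hWO.trans (sub_isBigO_comp_of_deriv_ne_zero hf.ne hfl h.tendsto)).neg_right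

theorem IsHeteroclinic.isIncreasingSolution {f w : ℝ → ℝ} (hw : IsHeteroclinic f w) :
    IsIncreasingSolution f w (derivWithin w (Ici 0)) 0 1 := by
  obtain ⟨hwC, hode, -, hlim, -, -, hpos⟩ := hw
  have hvC : ContDiffOn ℝ 1 (derivWithin w (Ici 0)) (Ici 0) :=
    hwC.derivWithin (uniqueDiffOn_Ici 0) (by norm_num)
  refine ⟨fun t ht => (hwC.differentiableOn (by norm_num) t ht).hasDerivWithinAt, fun t ht => ?_,
    hvC.continuousOn, hpos, hlim⟩
  rw [← eq_neg_of_add_eq_zero_left (hode t ht)]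
  exact (hvC.differentiableOn one_ne_zero t (Ioi_subset_Ici_self ht)).hasDerivWithinAt.hasDerivAt
    (Ici_mem_nhds ht)

/-- For bounded continuous `q`, the variation-of-parameters solution
`p` of `p'' + f'(w)p = q`, `p(0) = p'(0) = 0` is bounded on `[0,∞)` if and only if
`∫₀^∞ q w' dt = 0`. -/
theorem bounded_iff_orthogonal (f w : ℝ → ℝ) (hf : Monostable f)
    (hw : IsHeteroclinic f w) (q : ℝ → ℝ) (hq : ContinuousOn q (Set.Ici 0))
    (hqb : ∃ M : ℝ, ∀ t ∈ Set.Ici (0 : ℝ), |q t| ≤ M) :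
    let w' := derivWithin w (Set.Ici 0)
    let p : ℝ → ℝ := fun t =>
      w' t * ∫ τ in (0 : ℝ)..t, ((w' τ) ^ 2)⁻¹ * ∫ s in (0 : ℝ)..τ, w' s * q s
    (∃ M : ℝ, ∀ t ∈ Set.Ici (0 : ℝ), |p t| ≤ M) ↔
      (∫ t in Set.Ioi (0 : ℝ), q t * w' t) = 0 :=
  bounded_iff_orthogonal_general hw.isIncreasingSolution hf.2.2.2.2 hf.2.2.1
    ((hq.mono Ioi_subset_Ici_self).aestronglyMeasurable measurableSet_Ioi)
    (hqb.imp fun _ hM => ae_restrict_of_forall_mem measurableSet_Ioi fun t ht =>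
      hM t (Ioi_subset_Ici_self ht))
end

section
/- Let f be a monostable nonlinearity and w the associated heteroclinic. Then the problem p'' + f'(w(t)) p = −w'(t) on (0,∞) with p(0) = 0 has a unique bounded solution, given explicitly by p₀(t) = w'(t) · ∫₀^t (1/w'(τ)²) ( ∫_τ^∞ w'(s)² ds ) dτ; moreover p₀'(0) = ( ∫₀^∞ w'(t)² dt ) / w'(0) > 0. -/
open Set Filter MeasureTheory

/-- `p` is a bounded `C²` solution of `p'' + f'(w(t)) p = -w'(t)` on `(0,∞)`
with `p(0) = 0`. -/
def IsBddSol (f w p : ℝ → ℝ) : Prop :=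
  ContDiffOn ℝ 2 p (Set.Ici 0) ∧
  (∀ t ∈ Set.Ioi (0 : ℝ),
    derivWithin (derivWithin p (Set.Ici 0)) (Set.Ici 0) t + deriv f (w t) * p t
      = -(derivWithin w (Set.Ici 0) t)) ∧
  p 0 = 0 ∧
  (∃ M : ℝ, ∀ t ∈ Set.Ici (0 : ℝ), |p t| ≤ M)

/-!
Differentiating `w'' + f(w) = 0` shows that `u = w'` is a positive solution of the homogeneous
equation `u'' + f'(w) u = 0`. Reduction of order `p = u Q` turns `p'' + f'(w) p = -u` into
`(u² Q')' = -u²`, which is solved by `Q' = u⁻² ∫_τ^∞ u²`.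

*Uniqueness.* Let `d` be a bounded solution of the homogeneous equation with `d(0) = 0`, and let `C`
be its constant Wronskian with `u`. If `C ≠ 0`, then `C d > 0` on `(0, ∞)`, while
`(C u / d)' = -C² / d²` is bounded away from zero, so the positive function `C u / d` would become
negative in finite time. Hence `C = 0`, that is, `d / u` is constant.

*Boundedness.* Let `ℓ` be the limit of `w` and `0 < c < -f'(ℓ)`, so that `c (ℓ - w) ≤ f(w)` for
large times. Then `u' ≤ 0` and the energy `u² - c (ℓ - w)²` decreases to a nonnegative limit, whence
`∫_τ^∞ u² ≤ u(τ) (ℓ - w(τ)) ≤ u(τ)² / √c`. So `Q` grows at most linearly, and `t u(t)` is bounded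
because `u` is decreasing and integrable.
-/

open scoped Topology

section Calculus

variable {F F' : ℝ → ℝ} {s : Set ℝ} {a x y C : ℝ}

theorem image_sub_le_mul_sub_of_hasDerivWithinAt_le (hs : Convex ℝ s)
    (hF : ∀ z ∈ s, HasDerivWithinAt F (F' z) s z) (hC : ∀ z ∈ s, F' z ≤ C)
    (hx : x ∈ s) (hy : y ∈ s) (hxy : x ≤ y) : F y - F x ≤ C * (y - x) := by
  have hderiv : ∀ z ∈ interior s, HasDerivAt F (F' z) z := fun z hz =>
    (hF z (interior_subset hz)).hasDerivAt (mem_interior_iff_mem_nhds.1 hz)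
  refine hs.image_sub_le_mul_sub_of_deriv_le (fun z hz => (hF z hz).continuousWithinAt)
    (fun z hz => (hderiv z hz).differentiableAt.differentiableWithinAt) (fun z hz => ?_)
    x hx y hy hxy
  rw [(hderiv z hz).deriv]
  exact hC z (interior_subset hz)

theorem mul_sub_le_image_sub_of_le_hasDerivWithinAt (hs : Convex ℝ s)
    (hF : ∀ z ∈ s, HasDerivWithinAt F (F' z) s z) (hC : ∀ z ∈ s, C ≤ F' z)
    (hx : x ∈ s) (hy : y ∈ s) (hxy : x ≤ y) : C * (y - x) ≤ F y - F x := by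
  have := image_sub_le_mul_sub_of_hasDerivWithinAt_le hs (fun z hz => (hF z hz).neg)
    (fun z hz => neg_le_neg (hC z hz)) hx hy hxy
  simp only [Pi.neg_apply] at this
  linarith

theorem antitoneOn_of_forall_hasDerivWithinAt_nonpos (hs : Convex ℝ s)
    (hF : ∀ z ∈ s, HasDerivWithinAt F (F' z) s z) (hF' : ∀ z ∈ s, F' z ≤ 0) : AntitoneOn F s :=
  antitoneOn_of_hasDerivWithinAt_nonpos hs (fun z hz => (hF z hz).continuousWithinAt)
    (fun z hz => (hF z (interior_subset hz)).mono interior_subset)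
    (fun z hz => hF' z (interior_subset hz))

theorem strictMonoOn_of_forall_hasDerivWithinAt_pos (hs : Convex ℝ s)
    (hF : ∀ z ∈ s, HasDerivWithinAt F (F' z) s z) (hF' : ∀ z ∈ s, 0 < F' z) : StrictMonoOn F s :=
  strictMonoOn_of_hasDerivWithinAt_pos hs (fun z hz => (hF z hz).continuousWithinAt)
    (fun z hz => (hF z (interior_subset hz)).mono interior_subset)
    (fun z hz => hF' z (interior_subset hz))

theorem setIntegral_pos_of_forall_pos {α : Type*} [MeasurableSpace α] {μ : Measure α} {s : Set α}
    {g : α → ℝ} (hs : MeasurableSet s) (hμ : μ s ≠ 0) (hint : IntegrableOn g s μ)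
    (hg : ∀ z ∈ s, 0 < g z) : 0 < ∫ z in s, g z ∂μ := by
  have hsupport : Function.support g ∩ s = s := inter_eq_right.2 fun z hz => (hg z hz).ne'
  rw [setIntegral_pos_iff_support_of_nonneg_ae
    (ae_restrict_of_forall_mem hs fun z hz => (hg z hz).le) hint, hsupport]
  exact pos_iff_ne_zero.2 hμ

theorem exists_forall_abs_le_of_continuousOn_Ici {T B : ℝ} (hF : ContinuousOn F (Ici a))
    (hB : ∀ t ∈ Ici T, |F t| ≤ B) : ∃ M, ∀ t ∈ Ici a, |F t| ≤ M := by
  obtain ⟨B', hB'⟩ := isCompact_Icc.exists_bound_of_continuousOn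
    (hF.mono (Icc_subset_Ici_self : Icc a T ⊆ Ici a))
  refine ⟨max B B', fun t ht => ?_⟩
  rcases le_total T t with hTt | htT
  · exact (hB t hTt).trans (le_max_left B B')
  · exact (hB' t ⟨ht, htT⟩).trans (le_max_right B B')

theorem eventually_mul_sub_le_of_hasDerivAt {f : ℝ → ℝ} {f' ℓ c : ℝ} (hf : HasDerivAt f f' ℓ)
    (hfℓ : f ℓ = 0) (hc : f' < -c) : ∀ᶠ x in 𝓝[<] ℓ, c * (ℓ - x) ≤ f x := by
  have hslope := (hf.tendsto_slope.mono_left (nhdsWithin_mono ℓ fun x hx => ne_of_lt hx)).eventually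
    (gt_mem_nhds hc)
  filter_upwards [hslope, self_mem_nhdsWithin] with x hx hxℓ
  rw [slope_def_field, hfℓ, sub_zero, div_lt_iff_of_neg (sub_neg.2 hxℓ)] at hx
  linarith

end Calculus

section VectorCalculus

variable {E : Type*} [NormedAddCommGroup E] [NormedSpace ℝ E] {F F' F'' g : ℝ → E} {s : Set ℝ}
  {a t : ℝ}

theorem eq_left_of_hasDerivWithinAt_Ici_zero
    (hF : ∀ z ∈ Ici a, HasDerivWithinAt F 0 (Ici a) z) (ht : t ∈ Ici a) : F t = F a :=
  constant_of_has_deriv_right_zero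
    (fun z hz => (hF z hz.1).continuousWithinAt.mono Icc_subset_Ici_self)
    (fun z hz => (hF z hz.1).mono (Ici_subset_Ici.2 hz.1)) t ⟨ht, le_rfl⟩

theorem hasDerivWithinAt_integral_Ici [CompleteSpace E] (hg : ContinuousOn g (Ici a))
    (ht : t ∈ Ici a) :
    HasDerivWithinAt (fun x => ∫ z in a..x, g z) (g t) (Ici a) t := by
  have hext : Continuous fun z => g (max z a) :=
    hg.comp_continuous (by fun_prop) fun z => le_max_right z a
  have heq : ∀ x ∈ Ici a, ∫ z in a..x, g z = ∫ z in a..x, g (max z a) := fun x hx =>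
    intervalIntegral.integral_congr fun z hz => by
      rw [uIcc_of_le hx] at hz
      simp only [max_eq_left hz.1]
  refine ((hext.integral_hasStrictDerivAt a t).hasDerivAt.hasDerivWithinAt.congr heq
    (heq t ht)).congr_deriv ?_
  rw [max_eq_left (mem_Ici.1 ht)]

theorem hasDerivWithinAt_integral_Ioi [CompleteSpace E] (hg : ContinuousOn g (Ici a))
    (hint : IntegrableOn g (Ioi a)) (ht : t ∈ Ici a) :
    HasDerivWithinAt (fun x => ∫ z in Ioi x, g z) (-g t) (Ici a) t := by
  have heq : ∀ x ∈ Ici a, ∫ z in Ioi x, g z = (∫ z in Ioi a, g z) - ∫ z in a..x, g z :=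
    fun x hx => by rw [← intervalIntegral.integral_Ioi_sub_Ioi hint hx, sub_sub_cancel]
  exact ((hasDerivWithinAt_integral_Ici hg ht).const_sub _).congr heq (heq t ht)

theorem contDiffOn_two_of_hasDerivWithinAt_s10 (hs : UniqueDiffOn ℝ s)
    (hF : ∀ z ∈ s, HasDerivWithinAt F (F' z) s z)
    (hF' : ∀ z ∈ s, HasDerivWithinAt F' (F'' z) s z) (hF'' : ContinuousOn F'' s) :
    ContDiffOn ℝ 2 F s := by
  have hF'C : ContDiffOn ℝ 1 F' s := (contDiffOn_one_iff_derivWithin hs).2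
    ⟨fun z hz => (hF' z hz).differentiableWithinAt,
      hF''.congr fun z hz => (hF' z hz).derivWithin (hs z hz)⟩
  rw [← one_add_one_eq_two, contDiffOn_succ_iff_derivWithin hs]
  exact ⟨fun z hz => (hF z hz).differentiableWithinAt, by simp,
    hF'C.congr fun z hz => (hF z hz).derivWithin (hs z hz)⟩

theorem hasDerivWithinAt_derivWithin_Ici (hF : ContDiffOn ℝ 2 F (Ici a))
    (hg : ContinuousOn g (Ici a))
    (hFg : EqOn (derivWithin (derivWithin F (Ici a)) (Ici a)) g (Ioi a)) (ht : t ∈ Ici a) :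
    HasDerivWithinAt (derivWithin F (Ici a)) (g t) (Ici a) t := by
  have hF' : ContDiffOn ℝ 1 (derivWithin F (Ici a)) (Ici a) :=
    hF.derivWithin (uniqueDiffOn_Ici a) (by norm_num)
  have heq := hFg.of_subset_closure (hF'.continuousOn_derivWithin (uniqueDiffOn_Ici a) le_rfl) hg
    Ioi_subset_Ici_self (closure_Ioi a).ge
  rw [← heq ht]
  exact (hF'.differentiableOn one_ne_zero t ht).hasDerivWithinAt

end VectorCalculus

/-- The linear equation `y'' + q y = r` on `[a, ∞)`, as a first-order system in which `y'` is a
variable standing for the derivative of `y`; derivatives at `a` are one-sided. -/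
structure SolvesLinearODE (a : ℝ) (q r y y' : ℝ → ℝ) : Prop where
  hasDerivWithinAt : ∀ t ∈ Ici a, HasDerivWithinAt y (y' t) (Ici a) t
  hasDerivWithinAt_deriv : ∀ t ∈ Ici a, HasDerivWithinAt y' (r t - q t * y t) (Ici a) t

namespace SolvesLinearODE

variable {a t M : ℝ} {q r r₁ r₂ u u' y y' y₁ y₁' y₂ y₂' : ℝ → ℝ}

theorem continuousOn (hy : SolvesLinearODE a q r y y') : ContinuousOn y (Ici a) := fun t ht =>
  (hy.hasDerivWithinAt t ht).continuousWithinAt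

theorem sub (h₁ : SolvesLinearODE a q r₁ y₁ y₁') (h₂ : SolvesLinearODE a q r₂ y₂ y₂') :
    SolvesLinearODE a q (r₁ - r₂) (y₁ - y₂) (y₁' - y₂') where
  hasDerivWithinAt t ht := (h₁.hasDerivWithinAt t ht).sub (h₂.hasDerivWithinAt t ht)
  hasDerivWithinAt_deriv t ht :=
    ((h₁.hasDerivWithinAt_deriv t ht).sub (h₂.hasDerivWithinAt_deriv t ht)).congr_deriv
      (by simp only [Pi.sub_apply]; ring)

theorem derivWithin_eqOn (hy : SolvesLinearODE a q r y y') :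
    EqOn (derivWithin y (Ici a)) y' (Ici a) := fun t ht =>
  (hy.hasDerivWithinAt t ht).derivWithin (uniqueDiffOn_Ici a t ht)

theorem congr_derivWithin (hy : SolvesLinearODE a q r y y') :
    SolvesLinearODE a q r y (derivWithin y (Ici a)) where
  hasDerivWithinAt t ht := (hy.hasDerivWithinAt t ht).congr_deriv (hy.derivWithin_eqOn ht).symm
  hasDerivWithinAt_deriv t ht :=
    (hy.hasDerivWithinAt_deriv t ht).congr (fun _ hx => hy.derivWithin_eqOn hx)
      (hy.derivWithin_eqOn ht)

theorem derivWithin_iff_contDiffOn_two (hq : ContinuousOn q (Ici a)) (hr : ContinuousOn r (Ici a)) :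
    SolvesLinearODE a q r y (derivWithin y (Ici a)) ↔ ContDiffOn ℝ 2 y (Ici a) ∧
      ∀ t ∈ Ioi a, derivWithin (derivWithin y (Ici a)) (Ici a) t + q t * y t = r t where
  mp hy := by
    refine ⟨contDiffOn_two_of_hasDerivWithinAt_s10 (uniqueDiffOn_Ici a) hy.hasDerivWithinAt
      hy.hasDerivWithinAt_deriv (hr.sub (hq.mul hy.continuousOn)), fun t ht => ?_⟩
    have ht' : t ∈ Ici a := Ioi_subset_Ici_self ht
    rw [(hy.hasDerivWithinAt_deriv t ht').derivWithin (uniqueDiffOn_Ici a t ht'), sub_add_cancel]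
  mpr := fun ⟨hy, hode⟩ =>
    ⟨fun t ht => (hy.differentiableOn two_ne_zero t ht).hasDerivWithinAt,
      fun _ ht => hasDerivWithinAt_derivWithin_Ici hy (hr.sub (hq.mul hy.continuousOn))
        (fun z hz => eq_sub_of_add_eq (hode z hz)) ht⟩

theorem wronskian_eq (hu : SolvesLinearODE a q 0 u u') (hy : SolvesLinearODE a q 0 y y')
    (ht : t ∈ Ici a) : u t * y' t - u' t * y t = u a * y' a - u' a * y a :=
  eq_left_of_hasDerivWithinAt_Ici_zero (F := fun x => u x * y' x - u' x * y x) (fun x hx =>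
    (((hu.hasDerivWithinAt x hx).mul (hy.hasDerivWithinAt_deriv x hx)).sub
      ((hu.hasDerivWithinAt_deriv x hx).mul (hy.hasDerivWithinAt x hx))).congr_deriv
      (by simp only [Pi.zero_apply]; ring)) ht

theorem hasDerivWithinAt_div (hu : SolvesLinearODE a q 0 u u') (hy : SolvesLinearODE a q 0 y y')
    (ht : t ∈ Ici a) (hut : u t ≠ 0) :
    HasDerivWithinAt (fun x => y x / u x) ((u a * y' a - u' a * y a) / u t ^ 2) (Ici a) t :=
  ((hy.hasDerivWithinAt t ht).div (hu.hasDerivWithinAt t ht) hut).congr_deriv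
    (by rw [← hu.wronskian_eq hy ht]; ring)

theorem wronskian_mul_pos (hu : SolvesLinearODE a q 0 u u') (hy : SolvesLinearODE a q 0 y y')
    (hpos : ∀ t ∈ Ici a, 0 < u t) (hya : y a = 0) (hW : u a * y' a ≠ 0) (ht : a < t) :
    0 < u a * y' a * y t := by
  have hmono : StrictMonoOn (fun x => u a * y' a * (y x / u x)) (Ici a) :=
    strictMonoOn_of_forall_hasDerivWithinAt_pos (convex_Ici a)
      (fun x hx => (hu.hasDerivWithinAt_div hy hx (hpos x hx).ne').const_mul _)
      (fun x hx => by
        have := hpos x hx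
        rw [hya, mul_zero, sub_zero, ← mul_div_assoc, ← sq]
        positivity)
  have hlt := hmono self_mem_Ici (mem_Ici.2 ht.le) ht
  simp only [hya, zero_div, mul_zero, ← mul_div_assoc] at hlt
  exact (div_pos_iff_of_pos_right (hpos t ht.le)).1 hlt

theorem wronskian_eq_zero_of_bounded (hu : SolvesLinearODE a q 0 u u')
    (hy : SolvesLinearODE a q 0 y y') (hpos : ∀ t ∈ Ici a, 0 < u t) (hya : y a = 0)
    (hM : ∀ t ∈ Ici a, |y t| ≤ M) : u a * y' a = 0 := by
  by_contra hW
  set W := u a * y' a with hWdef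
  have hWy : ∀ t ∈ Ioi a, 0 < W * y t := fun t ht => hu.wronskian_mul_pos hy hpos hya hW ht
  have hy_ne : ∀ t ∈ Ioi a, y t ≠ 0 := fun t ht => right_ne_zero_of_mul (hWy t ht).ne'
  have ha1 : a + 1 ∈ Ioi a := lt_add_one a
  have hMpos : 0 < M := (abs_pos.2 (hy_ne _ ha1)).trans_le (hM _ (Ioi_subset_Ici_self ha1))
  set φ : ℝ → ℝ := fun t => W * (u t / y t) with hφ
  have hφpos : ∀ t ∈ Ioi a, 0 < φ t := fun t ht => by
    have : φ t = u t * (W * y t) / y t ^ 2 := by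
      have := hy_ne t ht
      simp only [hφ]
      field_simp
    rw [this]
    exact div_pos (mul_pos (hpos t (Ioi_subset_Ici_self ht)) (hWy t ht))
      (sq_pos_of_ne_zero (hy_ne t ht))
  have hφ' : ∀ t ∈ Ioi a, HasDerivWithinAt φ (-(W ^ 2 / y t ^ 2)) (Ioi a) t := fun t ht =>
    (((hy.hasDerivWithinAt_div hu (Ioi_subset_Ici_self ht) (hy_ne t ht)).const_mul W).mono
      Ioi_subset_Ici_self).congr_deriv (by rw [hya, hWdef]; ring)
  have hφ'_le : ∀ t ∈ Ioi a, -(W ^ 2 / y t ^ 2) ≤ -(W ^ 2 / M ^ 2) := fun t ht => by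
    have := sq_pos_of_ne_zero (hy_ne t ht)
    have := sq_le_sq.2 ((hM t (Ioi_subset_Ici_self ht)).trans (le_abs_self M))
    gcongr
  obtain ⟨δ, hδ, hδφ⟩ : ∃ δ, 0 ≤ δ ∧ W ^ 2 / M ^ 2 * δ = φ (a + 1) :=
    ⟨φ (a + 1) / (W ^ 2 / M ^ 2), by have := hφpos _ ha1; positivity, by field_simp⟩
  have hT : a + 1 + δ ∈ Ioi a := mem_Ioi.2 (by linarith)
  have hdecay := image_sub_le_mul_sub_of_hasDerivWithinAt_le (convex_Ioi a) hφ' hφ'_le ha1 hT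
    (by linarith)
  have := hφpos _ hT
  rw [add_sub_cancel_left] at hdecay
  linarith

theorem eqOn_zero_of_bounded (hu : SolvesLinearODE a q 0 u u') (hy : SolvesLinearODE a q 0 y y')
    (hpos : ∀ t ∈ Ici a, 0 < u t) (hya : y a = 0) (hM : ∀ t ∈ Ici a, |y t| ≤ M) :
    EqOn y 0 (Ici a) := by
  intro t ht
  have hW := hu.wronskian_eq_zero_of_bounded hy hpos hya hM
  have hquot : y t / u t = y a / u a :=
    eq_left_of_hasDerivWithinAt_Ici_zero (F := fun x => y x / u x) (fun x hx =>
      (hu.hasDerivWithinAt_div hy hx (hpos x hx).ne').congr_deriv (by simp [hya, hW])) ht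
  rw [hya, zero_div, div_eq_zero_iff] at hquot
  exact hquot.resolve_right (hpos t ht).ne'

theorem eqOn_of_bounded (hu : SolvesLinearODE a q 0 u u') (hpos : ∀ t ∈ Ici a, 0 < u t)
    (h₁ : SolvesLinearODE a q r y₁ y₁') (h₂ : SolvesLinearODE a q r y₂ y₂') (ha : y₁ a = y₂ a)
    (hb₁ : ∃ M, ∀ t ∈ Ici a, |y₁ t| ≤ M) (hb₂ : ∃ M, ∀ t ∈ Ici a, |y₂ t| ≤ M) :
    EqOn y₁ y₂ (Ici a) := by
  obtain ⟨M₁, hM₁⟩ := hb₁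
  obtain ⟨M₂, hM₂⟩ := hb₂
  have hsub : SolvesLinearODE a q 0 (y₁ - y₂) (y₁' - y₂') := sub_self r ▸ h₁.sub h₂
  intro t ht
  exact sub_eq_zero.1 (hu.eqOn_zero_of_bounded hsub hpos (sub_eq_zero.2 ha)
    (fun x hx => (abs_sub _ _).trans (add_le_add (hM₁ x hx) (hM₂ x hx))) ht)

end SolvesLinearODE

/-- The quotient `Q = p / u` of the particular solution `p` of `p'' + q p = -u` obtained from a
positive solution `u` of `u'' + q u = 0` by reduction of order, normalized by `Q(a) = 0`. -/
noncomputable def particularQuotient (a : ℝ) (u : ℝ → ℝ) (t : ℝ) : ℝ :=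
  ∫ τ in a..t, (u τ ^ 2)⁻¹ * ∫ s in Ioi τ, u s ^ 2

/-- The particular solution of `p'' + q p = -u` with `p(a) = 0` obtained from a positive solution
`u` of `u'' + q u = 0` by reduction of order. -/
noncomputable def particularSolution (a : ℝ) (u : ℝ → ℝ) (t : ℝ) : ℝ :=
  u t * particularQuotient a u t

section ParticularSolution

variable {a t : ℝ} {q u u' : ℝ → ℝ}

theorem particularSolution_left : particularSolution a u a = 0 := by
  simp [particularSolution, particularQuotient]

theorem particularQuotient_nonneg (ht : a ≤ t) : 0 ≤ particularQuotient a u t :=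
  intervalIntegral.integral_nonneg ht fun τ _ =>
    mul_nonneg (inv_nonneg.2 (sq_nonneg (u τ))) (integral_nonneg fun s => sq_nonneg (u s))

theorem hasDerivWithinAt_particularQuotient (hu : ContinuousOn u (Ici a))
    (hpos : ∀ t ∈ Ici a, 0 < u t) (hint : IntegrableOn (fun s => u s ^ 2) (Ioi a))
    (ht : t ∈ Ici a) :
    HasDerivWithinAt (particularQuotient a u) ((u t ^ 2)⁻¹ * ∫ s in Ioi t, u s ^ 2) (Ici a) t :=
  hasDerivWithinAt_integral_Ici (((hu.pow 2).inv₀ fun x hx => (pow_pos (hpos x hx) 2).ne').mul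
    fun _ hx => (hasDerivWithinAt_integral_Ioi (hu.pow 2) hint hx).continuousWithinAt) ht

theorem solvesLinearODE_particularSolution (hu : SolvesLinearODE a q 0 u u')
    (hpos : ∀ t ∈ Ici a, 0 < u t) (hint : IntegrableOn (fun s => u s ^ 2) (Ioi a)) :
    SolvesLinearODE a q (-u) (particularSolution a u)
      (fun t => u' t * particularQuotient a u t + (∫ s in Ioi t, u s ^ 2) / u t) := by
  refine ⟨fun t ht => ?_, fun t ht => ?_⟩
  all_goals
    have hut := (hpos t ht).ne'
    have hQ := hasDerivWithinAt_particularQuotient hu.continuousOn hpos hint ht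
  · refine ((hu.hasDerivWithinAt t ht).mul hQ).congr_deriv ?_
    field_simp
  · have htail := hasDerivWithinAt_integral_Ioi (g := fun s => u s ^ 2)
      (hu.continuousOn.pow 2) hint ht
    refine (((hu.hasDerivWithinAt_deriv t ht).mul hQ).add
      (htail.div (hu.hasDerivWithinAt t ht) hut)).congr_deriv ?_
    simp only [Pi.zero_apply, Pi.neg_apply, particularSolution]
    field_simp
    ring

theorem derivWithin_particularSolution_left (hu : SolvesLinearODE a q 0 u u')
    (hpos : ∀ t ∈ Ici a, 0 < u t) (hint : IntegrableOn (fun s => u s ^ 2) (Ioi a)) :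
    derivWithin (particularSolution a u) (Ici a) a = (∫ s in Ioi a, u s ^ 2) / u a := by
  rw [(solvesLinearODE_particularSolution hu hpos hint).derivWithin_eqOn self_mem_Ici]
  simp [particularQuotient]

end ParticularSolution

/-- The phase-plane curve `(w, u)`, `u = w'`, of a solution of `w'' + f(w) = 0` on `[a, ∞)` with
`w' > 0` that converges to `ℓ`; derivatives at `a` are one-sided. -/
structure IsIncreasingOrbit (f w u : ℝ → ℝ) (a ℓ : ℝ) : Prop where
  hasDerivWithinAt : ∀ t ∈ Ici a, HasDerivWithinAt w (u t) (Ici a) t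
  hasDerivWithinAt_deriv : ∀ t ∈ Ici a, HasDerivWithinAt u (-f (w t)) (Ici a) t
  pos : ∀ t ∈ Ici a, 0 < u t
  tendsto : Tendsto w atTop (𝓝 ℓ)

namespace IsIncreasingOrbit

variable {f w u : ℝ → ℝ} {a b t c ℓ f' : ℝ}

theorem mono_left (h : IsIncreasingOrbit f w u a ℓ) (hab : a ≤ b) : IsIncreasingOrbit f w u b ℓ :=
  have hsub : Ici b ⊆ Ici a := Ici_subset_Ici.2 hab
  ⟨fun t ht => (h.hasDerivWithinAt t (hsub ht)).mono hsub,
    fun t ht => (h.hasDerivWithinAt_deriv t (hsub ht)).mono hsub,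
    fun t ht => h.pos t (hsub ht), h.tendsto⟩

theorem continuousOn (h : IsIncreasingOrbit f w u a ℓ) : ContinuousOn w (Ici a) := fun t ht =>
  (h.hasDerivWithinAt t ht).continuousWithinAt

theorem continuousOn_deriv (h : IsIncreasingOrbit f w u a ℓ) : ContinuousOn u (Ici a) :=
  fun t ht => (h.hasDerivWithinAt_deriv t ht).continuousWithinAt

theorem strictMonoOn (h : IsIncreasingOrbit f w u a ℓ) : StrictMonoOn w (Ici a) :=
  strictMonoOn_of_forall_hasDerivWithinAt_pos (convex_Ici a) h.hasDerivWithinAt h.pos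

theorem lt_limit (h : IsIncreasingOrbit f w u a ℓ) (ht : t ∈ Ici a) : w t < ℓ := by
  have ht1 : t + 1 ∈ Ici a := (mem_Ici.1 ht).trans (lt_add_one t).le
  refine (h.strictMonoOn ht ht1 (lt_add_one t)).trans_le (ge_of_tendsto h.tendsto ?_)
  filter_upwards [eventually_ge_atTop (t + 1)] with s hs
  exact h.strictMonoOn.monotoneOn ht1 (mem_Ici.2 (ht1.trans hs)) hs

theorem hasDerivAt (h : IsIncreasingOrbit f w u a ℓ) (ht : t ∈ Ioi a) : HasDerivAt w (u t) t :=
  (h.hasDerivWithinAt t (Ioi_subset_Ici_self ht)).hasDerivAt (Ici_mem_nhds ht)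

theorem integrableOn_deriv (h : IsIncreasingOrbit f w u a ℓ) : IntegrableOn u (Ioi a) :=
  integrableOn_Ioi_deriv_of_nonneg (h.continuousOn a self_mem_Ici) (fun _ => h.hasDerivAt)
    (fun t ht => (h.pos t (Ioi_subset_Ici_self ht)).le) h.tendsto

theorem integral_deriv (h : IsIncreasingOrbit f w u a ℓ) : ∫ s in Ioi a, u s = ℓ - w a :=
  integral_Ioi_of_hasDerivAt_of_nonneg (h.continuousOn a self_mem_Ici) (fun _ => h.hasDerivAt)
    (fun t ht => (h.pos t (Ioi_subset_Ici_self ht)).le) h.tendsto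

theorem solvesLinearODE (h : IsIncreasingOrbit f w u a ℓ) (hf : Differentiable ℝ f) :
    SolvesLinearODE a (deriv f ∘ w) 0 u (fun t => -f (w t)) where
  hasDerivWithinAt := h.hasDerivWithinAt_deriv
  hasDerivWithinAt_deriv t ht :=
    ((hf (w t)).hasDerivAt.comp_hasDerivWithinAt t (h.hasDerivWithinAt t ht)).neg.congr_deriv
      (by simp)

theorem antitoneOn_deriv (h : IsIncreasingOrbit f w u a ℓ) (hf : ∀ t ∈ Ici a, 0 ≤ f (w t)) :
    AntitoneOn u (Ici a) :=
  antitoneOn_of_forall_hasDerivWithinAt_nonpos (convex_Ici a) h.hasDerivWithinAt_deriv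
    fun t ht => neg_nonpos.2 (hf t ht)

theorem sub_mul_deriv_le (h : IsIncreasingOrbit f w u a ℓ) (hf : ∀ t ∈ Ici a, 0 ≤ f (w t))
    (ht : t ∈ Ici a) : (t - a) * u t ≤ ℓ - w a := by
  have hmvt : u t * (t - a) ≤ w t - w a :=
    mul_sub_le_image_sub_of_le_hasDerivWithinAt (convex_Icc a t)
      (fun z hz => (h.hasDerivWithinAt z hz.1).mono Icc_subset_Ici_self)
      (fun z hz => h.antitoneOn_deriv hf hz.1 ht hz.2) (left_mem_Icc.2 ht) (right_mem_Icc.2 ht) ht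
  linarith [h.lt_limit ht]

theorem deriv_sq_le_mul_deriv (h : IsIncreasingOrbit f w u a ℓ) (hf : ∀ t ∈ Ici a, 0 ≤ f (w t))
    (ht : t ∈ Ici a) : u t ^ 2 ≤ u a * u t := by
  rw [sq]
  exact mul_le_mul_of_nonneg_right (h.antitoneOn_deriv hf self_mem_Ici ht ht) (h.pos t ht).le

theorem integrableOn_deriv_sq_of_nonneg (h : IsIncreasingOrbit f w u a ℓ)
    (hf : ∀ t ∈ Ici a, 0 ≤ f (w t)) : IntegrableOn (fun s => u s ^ 2) (Ioi a) := by
  refine Integrable.mono' (h.integrableOn_deriv.const_mul (u a))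
    (((h.continuousOn_deriv.pow 2).mono Ioi_subset_Ici_self).aestronglyMeasurable
      measurableSet_Ioi) (ae_restrict_of_forall_mem measurableSet_Ioi fun s hs => ?_)
  rw [Real.norm_of_nonneg (sq_nonneg _)]
  exact h.deriv_sq_le_mul_deriv hf (Ioi_subset_Ici_self hs)

theorem integral_deriv_sq_le (h : IsIncreasingOrbit f w u a ℓ) (hf : ∀ t ∈ Ici a, 0 ≤ f (w t)) :
    ∫ s in Ioi a, u s ^ 2 ≤ u a * (ℓ - w a) := by
  rw [← h.integral_deriv, ← integral_const_mul]
  exact setIntegral_mono_on (h.integrableOn_deriv_sq_of_nonneg hf)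
    (h.integrableOn_deriv.const_mul (u a)) measurableSet_Ioi
    fun s hs => h.deriv_sq_le_mul_deriv hf (Ioi_subset_Ici_self hs)

theorem nonneg_of_mul_sub_le (h : IsIncreasingOrbit f w u a ℓ) (hc : 0 ≤ c)
    (hf : ∀ t ∈ Ici a, c * (ℓ - w t) ≤ f (w t)) : ∀ t ∈ Ici a, 0 ≤ f (w t) := fun t ht =>
  (mul_nonneg hc (sub_nonneg.2 (h.lt_limit ht).le)).trans (hf t ht)

theorem mul_sq_sub_le_deriv_sq (h : IsIncreasingOrbit f w u a ℓ)
    (hf : ∀ t ∈ Ici a, c * (ℓ - w t) ≤ f (w t)) : c * (ℓ - w a) ^ 2 ≤ u a ^ 2 := by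
  have henergy : AntitoneOn (fun t => u t ^ 2 - c * (ℓ - w t) ^ 2) (Ici a) := by
    refine antitoneOn_of_forall_hasDerivWithinAt_nonpos (convex_Ici a)
      (F' := fun t => -(2 * u t * (f (w t) - c * (ℓ - w t)))) (fun t ht => ?_) (fun t ht => ?_)
    · exact (((h.hasDerivWithinAt_deriv t ht).pow 2).sub
        ((((h.hasDerivWithinAt t ht).const_sub ℓ).pow 2).const_mul c)).congr_deriv
          (by push_cast; ring)
    · exact neg_nonpos.2 (mul_nonneg (mul_nonneg zero_le_two (h.pos t ht).le)
        (sub_nonneg.2 (hf t ht)))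
  have hlim : Tendsto (fun t => -(c * (ℓ - w t) ^ 2)) atTop (𝓝 0) := by
    simpa using (((h.tendsto.const_sub ℓ).pow 2).const_mul c).neg
  refine sub_nonneg.1 (le_of_tendsto hlim ?_)
  filter_upwards [eventually_ge_atTop a] with t ht
  exact le_trans (by linarith [sq_nonneg (u t)]) (henergy self_mem_Ici ht ht)

theorem sqrt_mul_integral_deriv_sq_le (h : IsIncreasingOrbit f w u a ℓ) (hc : 0 ≤ c)
    (hf : ∀ t ∈ Ici a, c * (ℓ - w t) ≤ f (w t)) : √c * ∫ s in Ioi a, u s ^ 2 ≤ u a ^ 2 := by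
  have hua := (h.pos a self_mem_Ici).le
  have hroot : √c * (ℓ - w a) ≤ u a := by
    refine le_of_sq_le_sq ?_ hua
    rw [mul_pow, Real.sq_sqrt hc]
    exact h.mul_sq_sub_le_deriv_sq hf
  calc √c * ∫ s in Ioi a, u s ^ 2 ≤ √c * (u a * (ℓ - w a)) := by
        gcongr
        exact h.integral_deriv_sq_le (h.nonneg_of_mul_sub_le hc hf)
    _ = u a * (√c * (ℓ - w a)) := by ring
    _ ≤ u a * u a := by gcongr
    _ = u a ^ 2 := (sq _).symm

theorem exists_forall_mul_sub_le (h : IsIncreasingOrbit f w u a ℓ) (hf : HasDerivAt f f' ℓ)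
    (hfℓ : f ℓ = 0) (hf' : f' < 0) :
    ∃ c > 0, ∃ T ≥ a, ∀ t ∈ Ici T, c * (ℓ - w t) ≤ f (w t) := by
  have hw : Tendsto w atTop (𝓝[<] ℓ) := tendsto_nhdsWithin_iff.2
    ⟨h.tendsto, (eventually_ge_atTop a).mono fun _ => h.lt_limit⟩
  obtain ⟨T, hT⟩ := eventually_atTop.1 (hw.eventually
    (eventually_mul_sub_le_of_hasDerivAt (c := -f' / 2) hf hfℓ (by linarith)))
  exact ⟨-f' / 2, by linarith, max a T, le_max_left a T,
    fun t ht => hT t ((le_max_right a T).trans ht)⟩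

theorem integrableOn_deriv_sq (h : IsIncreasingOrbit f w u a ℓ) (hf : HasDerivAt f f' ℓ)
    (hfℓ : f ℓ = 0) (hf' : f' < 0) : IntegrableOn (fun s => u s ^ 2) (Ioi a) := by
  obtain ⟨c, hc, T, hT, hfc⟩ := h.exists_forall_mul_sub_le hf hfℓ hf'
  have hTail := h.mono_left hT
  rw [← Ioc_union_Ioi_eq_Ioi hT]
  refine IntegrableOn.union ?_
    (hTail.integrableOn_deriv_sq_of_nonneg (hTail.nonneg_of_mul_sub_le hc.le hfc))
  exact ((h.continuousOn_deriv.pow 2).mono Icc_subset_Ici_self).integrableOn_Icc.mono_set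
    Ioc_subset_Icc_self

theorem particularQuotient_sub_le (h : IsIncreasingOrbit f w u a ℓ)
    (hint : IntegrableOn (fun s => u s ^ 2) (Ioi a)) (hab : a ≤ b) (hc : 0 < c)
    (hf : ∀ t ∈ Ici b, c * (ℓ - w t) ≤ f (w t)) (ht : t ∈ Ici b) :
    particularQuotient a u t - particularQuotient a u b ≤ (√c)⁻¹ * (t - b) := by
  have hsub : Ici b ⊆ Ici a := Ici_subset_Ici.2 hab
  refine image_sub_le_mul_sub_of_hasDerivWithinAt_le (convex_Ici b) (fun z hz =>
    (hasDerivWithinAt_particularQuotient h.continuousOn_deriv h.pos hint (hsub hz)).mono hsub)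
    (fun z hz => ?_) self_mem_Ici ht ht
  have hz' : √c * ∫ s in Ioi z, u s ^ 2 ≤ u z ^ 2 :=
    (h.mono_left (hsub hz)).sqrt_mul_integral_deriv_sq_le hc.le
      fun t ht => hf t ((mem_Ici.1 hz).trans ht)
  rw [inv_mul_le_iff₀ (pow_pos (h.pos z (hsub hz)) 2), mul_comm,
    le_inv_mul_iff₀ (Real.sqrt_pos.2 hc)]
  exact hz'

theorem exists_forall_abs_particularSolution_le (h : IsIncreasingOrbit f w u a ℓ)
    (hf : HasDerivAt f f' ℓ) (hfℓ : f ℓ = 0) (hf' : f' < 0) :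
    ∃ M, ∀ t ∈ Ici a, |particularSolution a u t| ≤ M := by
  have hint := h.integrableOn_deriv_sq hf hfℓ hf'
  obtain ⟨c, hc, T, hT, hfc⟩ := h.exists_forall_mul_sub_le hf hfℓ hf'
  have htail := h.mono_left hT
  have hf_nonneg := htail.nonneg_of_mul_sub_le hc.le hfc
  have hcont : ContinuousOn (particularSolution a u) (Ici a) := h.continuousOn_deriv.mul fun _ ht =>
    (hasDerivWithinAt_particularQuotient h.continuousOn_deriv h.pos hint ht).continuousWithinAt
  refine exists_forall_abs_le_of_continuousOn_Ici hcont (T := T)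
    (B := u T * particularQuotient a u T + (√c)⁻¹ * (ℓ - w T)) fun t ht => ?_
  have hut := (htail.pos t ht).le
  have hQT : 0 ≤ particularQuotient a u T := particularQuotient_nonneg hT
  have hQt : 0 ≤ particularQuotient a u t := particularQuotient_nonneg (hT.le.trans ht)
  have hgrowth := h.particularQuotient_sub_le hint hT hc hfc ht
  calc |particularSolution a u t| = u t * particularQuotient a u t :=
        abs_of_nonneg (mul_nonneg hut hQt)
    _ ≤ u t * (particularQuotient a u T + (√c)⁻¹ * (t - T)) := by gcongr; linarith
    _ = u t * particularQuotient a u T + (√c)⁻¹ * ((t - T) * u t) := by ring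
    _ ≤ u T * particularQuotient a u T + (√c)⁻¹ * (ℓ - w T) := by
        gcongr
        · exact htail.antitoneOn_deriv hf_nonneg self_mem_Ici ht ht
        · exact htail.sub_mul_deriv_le hf_nonneg ht

end IsIncreasingOrbit

theorem isIncreasingOrbit_of_contDiffOn {f w : ℝ → ℝ} {a ℓ : ℝ} (hf : Continuous f)
    (hw : ContDiffOn ℝ 2 w (Ici a))
    (hode : ∀ t ∈ Ioi a, derivWithin (derivWithin w (Ici a)) (Ici a) t + f (w t) = 0)
    (hpos : ∀ t ∈ Ici a, 0 < derivWithin w (Ici a) t) (hlim : Tendsto w atTop (𝓝 ℓ)) :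
    IsIncreasingOrbit f w (derivWithin w (Ici a)) a ℓ where
  hasDerivWithinAt t ht := (hw.differentiableOn two_ne_zero t ht).hasDerivWithinAt
  hasDerivWithinAt_deriv _ := hasDerivWithinAt_derivWithin_Ici hw
    (hf.comp_continuousOn hw.continuousOn).neg fun t ht => eq_neg_of_add_eq_zero_left (hode t ht)
  pos := hpos
  tendsto := hlim

theorem isBddSol_iff {f w p : ℝ → ℝ} (hf : Continuous (deriv f)) (hw : ContDiffOn ℝ 2 w (Ici 0)) :
    IsBddSol f w p ↔
      SolvesLinearODE 0 (deriv f ∘ w) (-derivWithin w (Ici 0)) p (derivWithin p (Ici 0)) ∧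
        p 0 = 0 ∧ ∃ M, ∀ t ∈ Ici 0, |p t| ≤ M := by
  rw [SolvesLinearODE.derivWithin_iff_contDiffOn_two (hf.comp_continuousOn hw.continuousOn)
    (hw.continuousOn_derivWithin (uniqueDiffOn_Ici 0) one_le_two).neg, and_assoc]
  rfl

theorem unique_bounded_solution_general {f w : ℝ → ℝ} {ℓ : ℝ} (hf : ContDiff ℝ 1 f)
    (hfℓ : f ℓ = 0) (hf' : deriv f ℓ < 0) (hw : ContDiffOn ℝ 2 w (Ici 0))
    (hode : ∀ t ∈ Ioi 0, derivWithin (derivWithin w (Ici 0)) (Ici 0) t + f (w t) = 0)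
    (hpos : ∀ t ∈ Ici 0, 0 < derivWithin w (Ici 0) t) (hlim : Tendsto w atTop (𝓝 ℓ)) :
    let w' := derivWithin w (Ici 0)
    let p₀ := particularSolution 0 w'
    IsBddSol f w p₀ ∧
    (∀ p : ℝ → ℝ, IsBddSol f w p → EqOn p p₀ (Ici 0)) ∧
    derivWithin p₀ (Ici 0) 0 = (∫ t in Ioi 0, w' t ^ 2) / w' 0 ∧
    0 < derivWithin p₀ (Ici 0) 0 := by
  intro w' p₀
  have hfd : Differentiable ℝ f := hf.differentiable one_ne_zero
  have hsol_iff {p : ℝ → ℝ} := isBddSol_iff (p := p) (hf.continuous_deriv le_rfl) hw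
  have horbit := isIncreasingOrbit_of_contDiffOn hf.continuous hw hode hpos hlim
  have hw'_sol := horbit.solvesLinearODE hfd
  have hint := horbit.integrableOn_deriv_sq (hfd ℓ).hasDerivAt hfℓ hf'
  have hp₀_sol := (solvesLinearODE_particularSolution hw'_sol hpos hint).congr_derivWithin
  have hp₀_bdd := horbit.exists_forall_abs_particularSolution_le (hfd ℓ).hasDerivAt hfℓ hf'
  have hp₀_deriv := derivWithin_particularSolution_left hw'_sol hpos hint
  refine ⟨hsol_iff.2 ⟨hp₀_sol, particularSolution_left, hp₀_bdd⟩, fun p hp => ?_, hp₀_deriv, ?_⟩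
  · obtain ⟨hp_sol, hp0, hp_bdd⟩ := hsol_iff.1 hp
    exact hw'_sol.eqOn_of_bounded hpos hp_sol hp₀_sol (hp0.trans particularSolution_left.symm)
      hp_bdd hp₀_bdd
  · rw [hp₀_deriv]
    exact div_pos (setIntegral_pos_of_forall_pos measurableSet_Ioi (by simp) hint
      fun t ht => pow_pos (hpos t (Ioi_subset_Ici_self ht)) 2) (hpos 0 self_mem_Ici)

/-- The problem `p'' + f'(w)p = -w'` on `(0,∞)` with `p(0) = 0` has a
unique bounded solution, given explicitly by
`p₀(t) = w'(t) ∫₀^t (1/w'(τ)²) (∫_τ^∞ w'(s)² ds) dτ`, and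
`p₀'(0) = (∫₀^∞ w'² )/w'(0) > 0`. -/
theorem unique_bounded_solution (f w : ℝ → ℝ) (hf : Monostable f)
    (hw : IsHeteroclinic f w) :
    let w' := derivWithin w (Set.Ici 0)
    let p₀ : ℝ → ℝ := fun t =>
      w' t * ∫ τ in (0 : ℝ)..t, ((w' τ) ^ 2)⁻¹ * ∫ s in Set.Ioi τ, (w' s) ^ 2
    IsBddSol f w p₀ ∧
    (∀ p : ℝ → ℝ, IsBddSol f w p → Set.EqOn p p₀ (Set.Ici 0)) ∧
    derivWithin p₀ (Set.Ici 0) 0 = (∫ t in Set.Ioi (0 : ℝ), (w' t) ^ 2) / w' 0 ∧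
    0 < derivWithin p₀ (Set.Ici 0) 0 := by
  obtain ⟨hf, -, hf1, -, hf'1⟩ := hf
  obtain ⟨hwC, hode, -, hlim, -, -, hpos⟩ := hw
  exact unique_bounded_solution_general (hf.of_le (by exact_mod_cast le_top)) hf1 hf'1 hwC hode hpos
    hlim
end

section
/- Let N ≥ 2, σ ∈ (0,1) and ν > 1. For y = (y', y_N) ∈ ℝ^{N-1} × ℝ set 𝔯(y) = √(1 + |y'|²), and for ε ∈ (0,1] set 𝔯_ε(y) = 𝔯(εy). Let Γ ⊆ ℝ^N be nonempty, Γ_ε = ε⁻¹Γ, and for p : Γ → ℝ define q : Γ_ε → ℝ by q(y) = p(εy). Define the norms ‖q‖_{C^{0,σ}_ν(Γ_ε)} = sup_{Γ_ε} 𝔯_ε^ν |q| + sup_{y₁ ≠ y₂ ∈ Γ_ε} |𝔯_ε^ν q(y₁) − 𝔯_ε^ν q(y₂)|/|y₁ − y₂|^σ, and ‖p‖_{σ,ν,Γ} = sup_Γ 𝔯^ν |p| + sup_{y ∈ Γ} 𝔯(y)^{ν+σ} · [p]_{σ, B(y,1) ∩ Γ}, where [p]_{σ,Λ} is the σ-Hölder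 seminorm of p over Λ. Then there exists a constant C > 0 (depending only on N, σ, ν, not on ε or Γ) such that for all p and all ε ∈ (0,1]: (i) ‖q‖_{C^{0,σ}_ν(Γ_ε)} ≤ C ‖p‖_{σ,ν,Γ}, and (ii) ‖p‖_{σ,ν−σ,Γ} ≤ C ε^{−σ} ‖q‖_{C^{0,σ}_ν(Γ_ε)}. -/
open Set Metric

/-- The weight `𝔯(y) = √(1 + |y'|²)`, `y'` the first `N-1` coordinates of `y ∈ ℝ^N`. -/
noncomputable def rr {N : ℕ} (y : EuclideanSpace ℝ (Fin N)) : ℝ :=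
  Real.sqrt (1 + ∑ i : Fin N, if (i : ℕ) < N - 1 then (y i) ^ 2 else 0)

/-- `‖p‖_{σ,ν,Γ} ≤ K`: the weighted norm
`sup_Γ 𝔯^ν |p| + sup_{y∈Γ} 𝔯(y)^{ν+σ} [p]_{σ, B(y,1)∩Γ}` is bounded by `K`
(componentwise). -/
def PNormLe {N : ℕ} (σ ν : ℝ) (Γ : Set (EuclideanSpace ℝ (Fin N)))
    (p : EuclideanSpace ℝ (Fin N) → ℝ) (K : ℝ) : Prop :=
  (∀ y ∈ Γ, rr y ^ ν * |p y| ≤ K) ∧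
  (∀ y ∈ Γ, ∀ y₁ ∈ Metric.ball y 1 ∩ Γ, ∀ y₂ ∈ Metric.ball y 1 ∩ Γ, y₁ ≠ y₂ →
    rr y ^ (ν + σ) * (|p y₁ - p y₂| / dist y₁ y₂ ^ σ) ≤ K)

/-- `‖q‖_{C^{0,σ}_ν(Γ_ε)} ≤ K` for `q(y) = p(εy)` on `Γ_ε = ε⁻¹Γ`: the weighted norm
`sup 𝔯_ε^ν |q| + [𝔯_ε^ν q]_{σ,Γ_ε}` is bounded by `K` (componentwise). -/
def QNormLe {N : ℕ} (σ ν ε : ℝ) (Γ : Set (EuclideanSpace ℝ (Fin N)))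
    (p : EuclideanSpace ℝ (Fin N) → ℝ) (K : ℝ) : Prop :=
  (∀ y : EuclideanSpace ℝ (Fin N), ε • y ∈ Γ → rr (ε • y) ^ ν * |p (ε • y)| ≤ K) ∧
  (∀ y₁ y₂ : EuclideanSpace ℝ (Fin N), ε • y₁ ∈ Γ → ε • y₂ ∈ Γ → y₁ ≠ y₂ →
    |rr (ε • y₁) ^ ν * p (ε • y₁) - rr (ε • y₂) ^ ν * p (ε • y₂)|
      ≤ K * dist y₁ y₂ ^ σ)

/-! The weight `𝔯` is the Euclidean norm of `(1, y')`, so it is `1`-Lipschitz, and since `𝔯 ≥ 1`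
its values at two points at distance at most `r` have ratio at most `1 + r`. By the mean value
theorem `|𝔯(x)^ν - 𝔯(y)^ν|` is then at most a multiple of `𝔯(y)^ν |x - y|` for `|x - y| ≤ 2`. Hence
the difference between the increment `𝔯(x)^ν p(x) - 𝔯(y)^ν p(y)` and `𝔯(x)^ν (p(x) - p(y))` is at
most a multiple of `sup 𝔯^ν |p| · |x - y|^σ`; this single estimate gives both inequalities at short
range, while increments of `𝔯^ν p` over distances at least `1` are controlled by the sup norm alone.
The dilation by `ε` only rescales the Hölder seminorm, by the factor `ε^σ`. -/

lemma abs_rpow_mul {a : ℝ} (ha : 0 ≤ a) (s t : ℝ) : |a ^ s * t| = a ^ s * |t| := by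
  rw [abs_mul, abs_of_nonneg (Real.rpow_nonneg ha s)]

lemma rpow_le_mul_rpow_of_le_mul {a b M : ℝ} (ha : 0 < a) (hb : 0 < b) (hab : a ≤ M * b)
    (hba : b ≤ M * a) (s : ℝ) : a ^ s ≤ M ^ |s| * b ^ s := by
  have hM : 0 < M := pos_of_mul_pos_left (ha.trans_le hab) hb.le
  rcases le_total 0 s with hs | hs
  · rw [abs_of_nonneg hs, ← Real.mul_rpow hM.le hb.le]
    exact Real.rpow_le_rpow ha.le hab hs
  · calc a ^ s ≤ (M⁻¹ * b) ^ s :=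
          Real.rpow_le_rpow_of_nonpos (by positivity) ((inv_mul_le_iff₀ hM).2 hba) hs
      _ = M ^ |s| * b ^ s := by
          rw [Real.mul_rpow (by positivity) hb.le, Real.inv_rpow hM.le, ← Real.rpow_neg hM.le,
            abs_of_nonpos hs]

lemma abs_rpow_sub_rpow_le {a b M : ℝ} (hM : 1 ≤ M) (hb : 0 < b) (hab : a ≤ M * b)
    (hba : b ≤ M * a) (s : ℝ) :
    |a ^ s - b ^ s| ≤ |s| * M ^ |s - 1| * b ^ (s - 1) * |a - b| := by
  have hM₀ : 0 < M := zero_lt_one.trans_le hM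
  have pos_of_mem : ∀ t ∈ Icc (M⁻¹ * b) (M * b), 0 < t := fun t ht =>
    (by positivity : 0 < M⁻¹ * b).trans_le ht.1
  have deriv_bound : ∀ t ∈ Icc (M⁻¹ * b) (M * b),
      ‖s * t ^ (s - 1)‖ ≤ |s| * M ^ |s - 1| * b ^ (s - 1) := by
    intro t ht
    have ht₀ := pos_of_mem t ht
    rw [norm_mul, Real.norm_eq_abs, Real.norm_of_nonneg (by positivity), mul_assoc]
    gcongr
    exact rpow_le_mul_rpow_of_le_mul ht₀ hb ht.2 ((inv_mul_le_iff₀ hM₀).1 ht.1) _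
  exact (convex_Icc _ _).norm_image_sub_le_of_norm_hasDerivWithin_le
    (fun t ht => (Real.hasDerivAt_rpow_const (.inl (pos_of_mem t ht).ne')).hasDerivWithinAt)
    deriv_bound
    ⟨inv_mul_le_of_le_mul₀ hM₀.le hb.le (le_mul_of_one_le_left hb.le hM),
      le_mul_of_one_le_left hb.le hM⟩
    ⟨(inv_mul_le_iff₀ hM₀).2 hba, hab⟩

lemma le_mul_rpow_of_le {d M σ : ℝ} (hd : 0 ≤ d) (hM : 1 ≤ M) (hdM : d ≤ M)
    (hσ : σ ∈ Icc (0 : ℝ) 1) : d ≤ M * d ^ σ := by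
  rcases le_total d 1 with hd₁ | hd₁
  · exact (Real.self_le_rpow_of_le_one hd hd₁ hσ.2).trans
      (le_mul_of_one_le_left (Real.rpow_nonneg hd σ) hM)
  · exact hdM.trans (le_mul_of_one_le_right (by positivity) (Real.one_le_rpow hd₁ hσ.1))

/-- The constant in the Hölder estimate for the `ν`-th power of a `1`-Lipschitz weight `≥ 1` at
points at distance at most `2`: the factors `3` and `2` bound the ratio of the weights and
`d / d ^ σ` for `d ≤ 2`, respectively. -/
noncomputable def weightConst (ν : ℝ) : ℝ := |ν| * 3 ^ |ν - 1| * 2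

lemma weightConst_nonneg (ν : ℝ) : 0 ≤ weightConst ν := by
  unfold weightConst
  positivity

section LipschitzWeight

variable {X : Type*} [PseudoMetricSpace X] {w : X → ℝ} {x y z : X} {σ ν K : ℝ} {f : X → ℝ}

lemma weight_le_mul_of_dist_le (hw : LipschitzWith 1 w) (hw₁ : ∀ x, 1 ≤ w x) {r : ℝ}
    (hxy : dist x y ≤ r) : w x ≤ (1 + r) * w y := by
  have hr : 0 ≤ r := dist_nonneg.trans hxy
  calc w x ≤ w y + dist x y := by simpa using hw.le_add_mul x y
    _ ≤ w y + r * w y := add_le_add_right (hxy.trans (le_mul_of_one_le_right hr (hw₁ y))) _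
    _ = (1 + r) * w y := by ring

lemma abs_weight_rpow_sub_le (hw : LipschitzWith 1 w) (hw₁ : ∀ x, 1 ≤ w x)
    (hσ : σ ∈ Icc (0 : ℝ) 1) (hxy : dist x y ≤ 2) :
    |w x ^ ν - w y ^ ν| ≤ weightConst ν * w y ^ ν * dist x y ^ σ := by
  have hy : 0 < w y := zero_lt_one.trans_le (hw₁ y)
  have ratio_le : w x ≤ 3 * w y := by linarith [weight_le_mul_of_dist_le hw hw₁ hxy]
  have ratio_ge : w y ≤ 3 * w x := by
    linarith [weight_le_mul_of_dist_le hw hw₁ ((dist_comm y x).trans_le hxy)]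
  have lip : |w x - w y| ≤ dist x y := by
    simpa [Real.dist_eq] using hw.dist_le_mul x y
  calc |w x ^ ν - w y ^ ν|
      ≤ |ν| * 3 ^ |ν - 1| * w y ^ (ν - 1) * |w x - w y| :=
        abs_rpow_sub_rpow_le (by norm_num) hy ratio_le ratio_ge ν
    _ ≤ |ν| * 3 ^ |ν - 1| * w y ^ ν * (2 * dist x y ^ σ) := by
        gcongr
        · exact hw₁ y
        · linarith
        · exact lip.trans (le_mul_rpow_of_le dist_nonneg one_le_two hxy hσ)
    _ = weightConst ν * w y ^ ν * dist x y ^ σ := by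
        unfold weightConst
        ring

lemma abs_weighted_sub_sub_le (hw : LipschitzWith 1 w) (hw₁ : ∀ x, 1 ≤ w x)
    (hσ : σ ∈ Icc (0 : ℝ) 1) (hxy : dist x y ≤ 2) (hy : w y ^ ν * |f y| ≤ K) :
    |(w x ^ ν * f x - w y ^ ν * f y) - w x ^ ν * (f x - f y)| ≤
      weightConst ν * K * dist x y ^ σ := by
  have hν := weightConst_nonneg ν
  calc |(w x ^ ν * f x - w y ^ ν * f y) - w x ^ ν * (f x - f y)|
      = |w x ^ ν - w y ^ ν| * |f y| := by rw [← abs_mul]; ring_nf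
    _ ≤ weightConst ν * w y ^ ν * dist x y ^ σ * |f y| := by
        gcongr
        exact abs_weight_rpow_sub_le hw hw₁ hσ hxy
    _ = weightConst ν * (w y ^ ν * |f y|) * dist x y ^ σ := by ring
    _ ≤ weightConst ν * K * dist x y ^ σ := by gcongr

lemma abs_weighted_sub_le (hw : LipschitzWith 1 w) (hw₁ : ∀ x, 1 ≤ w x)
    (hσ : σ ∈ Icc (0 : ℝ) 1) (hx : w x ^ ν * |f x| ≤ K) (hy : w y ^ ν * |f y| ≤ K)
    (hloc : dist x y < 1 → w x ^ ν * |f x - f y| ≤ K * dist x y ^ σ) :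
    |w x ^ ν * f x - w y ^ ν * f y| ≤ (2 + weightConst ν) * K * dist x y ^ σ := by
  have hw₀ : ∀ x, 0 ≤ w x := fun x => zero_le_one.trans (hw₁ x)
  have hK : 0 ≤ K := le_trans (mul_nonneg (Real.rpow_nonneg (hw₀ x) ν) (abs_nonneg _)) hx
  have hν := weightConst_nonneg ν
  have hKd : 0 ≤ K * dist x y ^ σ := by positivity
  rcases lt_or_ge (dist x y) 1 with hd | hd
  · have increment := hloc hd
    have error := abs_weighted_sub_sub_le hw hw₁ hσ (by linarith) hy
    rw [← abs_rpow_mul (hw₀ x)] at increment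
    linarith [abs_sub_abs_le_abs_sub (w x ^ ν * f x - w y ^ ν * f y) (w x ^ ν * (f x - f y))]
  · calc |w x ^ ν * f x - w y ^ ν * f y|
        ≤ |w x ^ ν * f x| + |w y ^ ν * f y| := abs_sub _ _
      _ = w x ^ ν * |f x| + w y ^ ν * |f y| := by
          rw [abs_rpow_mul (hw₀ x), abs_rpow_mul (hw₀ y)]
      _ ≤ (2 + weightConst ν) * K * 1 := by linarith [mul_nonneg hν hK]
      _ ≤ (2 + weightConst ν) * K * dist x y ^ σ := by
          gcongr
          exact Real.one_le_rpow hd hσ.1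

lemma weight_mul_abs_sub_le (hw : LipschitzWith 1 w) (hw₁ : ∀ x, 1 ≤ w x)
    (hσ : σ ∈ Icc (0 : ℝ) 1) (hx : x ∈ ball z 1) (hy : y ∈ ball z 1) (hfy : w y ^ ν * |f y| ≤ K)
    (hf : |w x ^ ν * f x - w y ^ ν * f y| ≤ K * dist x y ^ σ) :
    w z ^ ν * |f x - f y| ≤ 2 ^ |ν| * ((1 + weightConst ν) * K * dist x y ^ σ) := by
  have hw₀ : ∀ x, 0 < w x := fun x => zero_lt_one.trans_le (hw₁ x)
  rw [mem_ball] at hx hy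
  have hxy : dist x y ≤ 2 := by linarith [dist_triangle_right x y z]
  have increment : w x ^ ν * |f x - f y| ≤ (1 + weightConst ν) * K * dist x y ^ σ := by
    rw [← abs_rpow_mul (hw₀ x).le]
    have error := abs_weighted_sub_sub_le hw hw₁ hσ hxy hfy
    rw [abs_sub_comm] at error
    linarith [abs_sub_abs_le_abs_sub (w x ^ ν * (f x - f y)) (w x ^ ν * f x - w y ^ ν * f y)]
  have weight_le : w z ^ ν ≤ 2 ^ |ν| * w x ^ ν := by
    refine rpow_le_mul_rpow_of_le_mul (hw₀ z) (hw₀ x) ?_ ?_ ν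
    · linarith [weight_le_mul_of_dist_le hw hw₁ ((dist_comm z x).trans_le hx.le)]
    · linarith [weight_le_mul_of_dist_le hw hw₁ hx.le]
  calc w z ^ ν * |f x - f y| ≤ 2 ^ |ν| * w x ^ ν * |f x - f y| := by gcongr
    _ = 2 ^ |ν| * (w x ^ ν * |f x - f y|) := mul_assoc _ _ _
    _ ≤ 2 ^ |ν| * ((1 + weightConst ν) * K * dist x y ^ σ) := by gcongr

end LipschitzWeight

section Euclidean

variable {N : ℕ} {σ ν ε K : ℝ} {Γ : Set (EuclideanSpace ℝ (Fin N))}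
  {p : EuclideanSpace ℝ (Fin N) → ℝ}

/-- The vector `(1, y', 0)`, whose Euclidean norm is `𝔯(y)`. The index `none` carries the
constant coordinate, and the last coordinate of `y` is replaced by `0`. -/
noncomputable def weightVector (y : EuclideanSpace ℝ (Fin N)) :
    EuclideanSpace ℝ (Option (Fin N)) :=
  WithLp.toLp 2 fun i => i.elim 1 fun j => if (j : ℕ) < N - 1 then y j else 0

lemma norm_weightVector (y : EuclideanSpace ℝ (Fin N)) : ‖weightVector y‖ = rr y := by
  simp [EuclideanSpace.norm_eq, weightVector, rr, Fintype.sum_option, ite_pow]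

lemma lipschitzWith_weightVector : LipschitzWith 1 (weightVector (N := N)) := by
  refine LipschitzWith.mk_one fun x y => ?_
  rw [EuclideanSpace.dist_eq, EuclideanSpace.dist_eq, Fintype.sum_option]
  refine Real.sqrt_le_sqrt ?_
  simp only [weightVector, Option.elim_none, Option.elim_some, dist_self, ne_eq,
    OfNat.ofNat_ne_zero, not_false_eq_true, zero_pow, zero_add]
  refine Finset.sum_le_sum fun i _ => ?_
  split_ifs
  · exact le_rfl
  · simp

lemma lipschitzWith_rr : LipschitzWith 1 (rr (N := N)) := by
  simpa [Function.comp_def, norm_weightVector] using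
    lipschitzWith_one_norm.comp (lipschitzWith_weightVector (N := N))

lemma one_le_rr (y : EuclideanSpace ℝ (Fin N)) : 1 ≤ rr y := by
  calc (1 : ℝ) = ‖weightVector y none‖ := by simp [weightVector]
    _ ≤ rr y := (PiLp.norm_apply_le _ none).trans_eq (norm_weightVector y)

lemma qNormLe_iff (hε : 0 < ε) :
    QNormLe σ ν ε Γ p K ↔ (∀ x ∈ Γ, rr x ^ ν * |p x| ≤ K) ∧
      ∀ x ∈ Γ, ∀ y ∈ Γ, x ≠ y →
        |rr x ^ ν * p x - rr y ^ ν * p y| ≤ ε ^ (-σ) * K * dist x y ^ σ := by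
  have hsurj (x : EuclideanSpace ℝ (Fin N)) : ∃ x₀, ε • x₀ = x :=
    ⟨ε⁻¹ • x, smul_inv_smul₀ hε.ne' x⟩
  have hscale (x y : EuclideanSpace ℝ (Fin N)) :
      ε ^ (-σ) * K * dist (ε • x) (ε • y) ^ σ = K * dist x y ^ σ := by
    rw [dist_smul₀, Real.norm_of_nonneg hε.le, Real.mul_rpow hε.le dist_nonneg,
      Real.rpow_neg hε.le]
    field_simp
  refine and_congr ⟨fun h x hx => ?_, fun h x₀ hx => h (ε • x₀) hx⟩
    ⟨fun h x hx y hy hne => ?_, fun h x₀ y₀ hx hy hne => ?_⟩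
  · obtain ⟨x₀, rfl⟩ := hsurj x
    exact h x₀ hx
  · obtain ⟨x₀, rfl⟩ := hsurj x
    obtain ⟨y₀, rfl⟩ := hsurj y
    rw [hscale]
    exact h x₀ y₀ hx hy (ne_of_apply_ne _ hne)
  · rw [← hscale]
    exact h (ε • x₀) hx (ε • y₀) hy ((smul_right_injective _ hε.ne').ne hne)

lemma PNormLe.mono {K' : ℝ} (h : PNormLe σ ν Γ p K) (hK : K ≤ K') : PNormLe σ ν Γ p K' :=
  ⟨fun y hy => (h.1 y hy).trans hK,
    fun y hy y₁ hy₁ y₂ hy₂ hne => (h.2 y hy y₁ hy₁ y₂ hy₂ hne).trans hK⟩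

lemma QNormLe.mono {K' : ℝ} (h : QNormLe σ ν ε Γ p K) (hK : K ≤ K') : QNormLe σ ν ε Γ p K' :=
  ⟨fun y hy => (h.1 y hy).trans hK, fun y₁ y₂ hy₁ hy₂ hne =>
    (h.2 y₁ y₂ hy₁ hy₂ hne).trans (by gcongr)⟩

lemma PNormLe.rr_rpow_mul_abs_sub_le (hσ : 0 ≤ σ) (h : PNormLe σ ν Γ p K)
    {x y : EuclideanSpace ℝ (Fin N)} (hx : x ∈ Γ) (hy : y ∈ Γ) (hne : x ≠ y)
    (hxy : dist x y < 1) : rr x ^ ν * |p x - p y| ≤ K * dist x y ^ σ := by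
  have hd : 0 < dist x y ^ σ := Real.rpow_pos_of_pos (dist_pos.2 hne) σ
  have hball := h.2 x hx x ⟨mem_ball_self one_pos, hx⟩ y ⟨mem_ball'.2 hxy, hy⟩ hne
  rw [← mul_div_assoc, div_le_iff₀ hd] at hball
  refine le_trans ?_ hball
  gcongr
  · exact one_le_rr x
  · exact le_add_of_nonneg_right hσ

lemma PNormLe.qNormLe (hσ : σ ∈ Icc (0 : ℝ) 1) (hε : 0 < ε) (hε₁ : ε ≤ 1) (hK : 0 ≤ K)
    (h : PNormLe σ ν Γ p K) : QNormLe σ ν ε Γ p ((2 + weightConst ν) * K) := by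
  have hν := weightConst_nonneg ν
  have hεσ : 1 ≤ ε ^ (-σ) :=
    Real.one_le_rpow_of_pos_of_le_one_of_nonpos hε hε₁ (neg_nonpos.2 hσ.1)
  refine (qNormLe_iff hε).2 ⟨fun x hx => (h.1 x hx).trans (le_mul_of_one_le_left hK (by linarith)),
    fun x hx y hy hne => ?_⟩
  calc |rr x ^ ν * p x - rr y ^ ν * p y| ≤ (2 + weightConst ν) * K * dist x y ^ σ :=
        abs_weighted_sub_le lipschitzWith_rr one_le_rr hσ (h.1 x hx) (h.1 y hy)
          (h.rr_rpow_mul_abs_sub_le hσ.1 hx hy hne)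
    _ ≤ ε ^ (-σ) * ((2 + weightConst ν) * K) * dist x y ^ σ := by
        refine mul_le_mul_of_nonneg_right ?_ (by positivity)
        exact le_mul_of_one_le_left (by positivity) hεσ

lemma QNormLe.pNormLe (hσ : σ ∈ Icc (0 : ℝ) 1) (hε : 0 < ε) (hε₁ : ε ≤ 1) (hK : 0 ≤ K)
    (h : QNormLe σ ν ε Γ p K) :
    PNormLe σ (ν - σ) Γ p (2 ^ |ν| * (1 + weightConst ν) * ε ^ (-σ) * K) := by
  have hν := weightConst_nonneg ν
  have hKε : K ≤ ε ^ (-σ) * K := le_mul_of_one_le_left hK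
    (Real.one_le_rpow_of_pos_of_le_one_of_nonpos hε hε₁ (neg_nonpos.2 hσ.1))
  have hC : 1 ≤ 2 ^ |ν| * (1 + weightConst ν) :=
    one_le_mul_of_one_le_of_one_le (Real.one_le_rpow one_le_two (abs_nonneg ν)) (by linarith)
  obtain ⟨hsup, hhol⟩ := (qNormLe_iff hε).1 h
  refine ⟨fun x hx => ?_, fun z _ x hx y hy hne => ?_⟩
  · calc rr x ^ (ν - σ) * |p x| ≤ rr x ^ ν * |p x| := by
          gcongr
          · exact one_le_rr x
          · exact sub_le_self ν hσ.1
      _ ≤ ε ^ (-σ) * K := (hsup x hx).trans hKε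
      _ ≤ 2 ^ |ν| * (1 + weightConst ν) * (ε ^ (-σ) * K) :=
          le_mul_of_one_le_left (by positivity) hC
      _ = 2 ^ |ν| * (1 + weightConst ν) * ε ^ (-σ) * K := (mul_assoc _ _ _).symm
  · have hd : 0 < dist x y ^ σ := Real.rpow_pos_of_pos (dist_pos.2 hne) σ
    rw [sub_add_cancel, ← mul_div_assoc, div_le_iff₀ hd]
    calc rr z ^ ν * |p x - p y|
        ≤ 2 ^ |ν| * ((1 + weightConst ν) * (ε ^ (-σ) * K) * dist x y ^ σ) :=
          weight_mul_abs_sub_le lipschitzWith_rr one_le_rr hσ hx.1 hy.1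
            ((hsup y hy.2).trans hKε) (hhol x hx.2 y hy.2 hne)
      _ = 2 ^ |ν| * (1 + weightConst ν) * ε ^ (-σ) * K * dist x y ^ σ := by ring

end Euclidean

theorem norm_comparison_general (σ ν : ℝ) (hσ : σ ∈ Icc (0 : ℝ) 1) :
    ∃ C > (0 : ℝ), ∀ (N : ℕ) (ε : ℝ), 0 < ε → ε ≤ 1 →
      ∀ (Γ : Set (EuclideanSpace ℝ (Fin N))) (p : EuclideanSpace ℝ (Fin N) → ℝ),
        (∀ K : ℝ, 0 ≤ K → PNormLe σ ν Γ p K → QNormLe σ ν ε Γ p (C * K)) ∧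
        (∀ K : ℝ, 0 ≤ K → QNormLe σ ν ε Γ p K →
          PNormLe σ (ν - σ) Γ p (C * ε ^ (-σ) * K)) := by
  have hν := weightConst_nonneg ν
  refine ⟨max (2 + weightConst ν) (2 ^ |ν| * (1 + weightConst ν)),
    lt_max_of_lt_left (by positivity), fun N ε hε hε₁ Γ p => ⟨fun K hK h => ?_, fun K hK h => ?_⟩⟩
  · refine (h.qNormLe hσ hε hε₁ hK).mono ?_
    gcongr
    exact le_max_left _ _
  · refine (h.pNormLe hσ hε hε₁ hK).mono ?_
    gcongr
    exact le_max_right _ _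

/-- Comparison between the weighted Hölder norms on `Γ` and on the
dilated set `Γ_ε = ε⁻¹Γ`: `‖q‖_{C^{0,σ}_ν(Γ_ε)} ≤ C‖p‖_{σ,ν,Γ}` and
`‖p‖_{σ,ν−σ,Γ} ≤ C ε^{−σ} ‖q‖_{C^{0,σ}_ν(Γ_ε)}`, with `C = C(N,σ,ν)` independent of
`ε ∈ (0,1]` and of `Γ`. -/
theorem norm_comparison (N : ℕ) (hN : 2 ≤ N) (σ ν : ℝ) (hσ : σ ∈ Set.Ioo (0 : ℝ) 1)
    (hν : 1 < ν) :
    ∃ C > (0 : ℝ), ∀ ε : ℝ, 0 < ε → ε ≤ 1 →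
      ∀ Γ : Set (EuclideanSpace ℝ (Fin N)), Γ.Nonempty →
        ∀ p : EuclideanSpace ℝ (Fin N) → ℝ,
          (∀ K : ℝ, 0 ≤ K → PNormLe σ ν Γ p K → QNormLe σ ν ε Γ p (C * K)) ∧
          (∀ K : ℝ, 0 ≤ K → QNormLe σ ν ε Γ p K →
            PNormLe σ (ν - σ) Γ p (C * ε ^ (-σ) * K)) := by
  obtain ⟨C, hC, h⟩ := norm_comparison_general σ ν (Ioo_subset_Icc_self hσ)
  exact ⟨C, hC, fun ε hε hε₁ Γ _ => h N ε hε hε₁ Γ⟩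
end
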